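/- arXiv:2309.08013 — 5 statements merged into one kernel-verified Lean document; each statement's English description precedes it below -/
import Mathlib

section
/- For 0 < f < e < 1, the standard Poncelet map P_e^f maps the unit circle to itself and admits a lift: there exists a continuous, monotone increasing map L : ℝ → ℝ with L(θ+1) = L(θ)+1 such that P_e^f(cos 2πθ, sin 2πθ) = (cos 2πL(θ), sin 2πL(θ)) for all θ ∈ ℝ, and the translation number lim_{n→∞} Lⁿ(0)/n of L equals the billiard rotation number ρ̂(e,f) = F(ω̂(e,f), e)/(2K(e)). -/
open Real

/-- Incomplete elliptic integral of the first kind `F(φ,e)`. -/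
noncomputable def ellF (φ e : ℝ) : ℝ :=
  ∫ τ in (0:ℝ)..φ, 1 / Real.sqrt (1 - e ^ 2 * Real.sin τ ^ 2)

/-- Complete elliptic integral of the first kind `K(e)`. -/
noncomputable def ellK (e : ℝ) : ℝ := ellF (Real.pi / 2) e

/-- The angle `ω̂(e,f)`. -/
noncomputable def omegaHat (e f : ℝ) : ℝ :=
  Real.arcsin (Real.sqrt ((e ^ 2 - f ^ 2) / (e ^ 2 * (1 - f ^ 2))))

/-- The billiard rotation number `ρ̂(e,f)`. -/
noncomputable def rhoHat (e f : ℝ) : ℝ := ellF (omegaHat e f) e / (2 * ellK e)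

/-- The standard Poncelet map `P_e^f` on the unit circle. -/
noncomputable def poncelet (e f : ℝ) (p : ℝ × ℝ) : ℝ × ℝ :=
  let X := p.1
  let Y := p.2
  let A1 := 2 * f * Real.sqrt ((1 - f ^ 2) * (e ^ 2 - f ^ 2))
  let A2 := e ^ 2 - f ^ 4
  let A3 := e ^ 2 + f ^ 4 - 2 * f ^ 2
  let A4 := e ^ 2 * (1 - 2 * f ^ 2) + f ^ 4
  (-((A1 * A4 * Y * Real.sqrt (1 - e ^ 2 * Y ^ 2) + A2 * A3 * X) /
      (A2 ^ 2 - A1 ^ 2 * e ^ 2 * Y ^ 2)),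
    (A1 * A2 * X * Real.sqrt (1 - e ^ 2 * Y ^ 2) - A3 * A4 * Y) /
      (A2 ^ 2 - A1 ^ 2 * e ^ 2 * Y ^ 2))

section JacobiAddition

variable {s c d : ℝ → ℝ} {k : ℝ}

lemma den_pos (hk : k ^ 2 < 1) {a b x y : ℝ} (h1 : a ^ 2 + x ^ 2 = 1) (h2 : b ^ 2 + y ^ 2 = 1) :
    0 < 1 - k ^ 2 * a ^ 2 * b ^ 2 := by
  have ha : a ^ 2 ≤ 1 := by nlinarith [sq_nonneg x]
  have hb : b ^ 2 ≤ 1 := by nlinarith [sq_nonneg y]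
  have hab : a ^ 2 * b ^ 2 ≤ 1 := by nlinarith [sq_nonneg a, sq_nonneg b]
  have : k ^ 2 * (a ^ 2 * b ^ 2) ≤ k ^ 2 * 1 := mul_le_mul_of_nonneg_left hab (sq_nonneg k)
  nlinarith

lemma const_of_deriv_zero {g : ℝ → ℝ} (h : ∀ x, HasDerivAt g 0 x) (x y : ℝ) : g x = g y :=
  is_const_of_deriv_eq_zero (fun x => (h x).differentiableAt) (fun x => (h x).deriv) x y

lemma sn_add (hk : k ^ 2 < 1)
    (hs : ∀ u, HasDerivAt s (c u * d u) u)
    (hc : ∀ u, HasDerivAt c (-(s u * d u)) u)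
    (hd : ∀ u, HasDerivAt d (-(k ^ 2 * s u * c u)) u)
    (hsc : ∀ u, s u ^ 2 + c u ^ 2 = 1) (hsd : ∀ u, d u ^ 2 + k ^ 2 * s u ^ 2 = 1)
    (s0 : s 0 = 0) (c0 : c 0 = 1) (d0 : d 0 = 1) (u v : ℝ) :
    s (u + v) = (s u * c v * d v + s v * c u * d u) / (1 - k ^ 2 * s u ^ 2 * s v ^ 2) := by
  set w := u + v with hw
  have hv : ∀ x : ℝ, HasDerivAt (fun x => w - x) (-1) x := fun x => by
    simpa using (hasDerivAt_id x).const_sub w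
  have hs2 : ∀ x, HasDerivAt (fun x => s (w - x)) (c (w - x) * d (w - x) * (-1)) x :=
    fun x => (hs (w - x)).comp x (hv x)
  have hc2 : ∀ x, HasDerivAt (fun x => c (w - x)) (-(s (w - x) * d (w - x)) * (-1)) x :=
    fun x => (hc (w - x)).comp x (hv x)
  have hd2 : ∀ x, HasDerivAt (fun x => d (w - x)) (-(k ^ 2 * s (w - x) * c (w - x)) * (-1)) x :=
    fun x => (hd (w - x)).comp x (hv x)
  have key : ∀ x, HasDerivAt (fun x => (s x * c (w - x) * d (w - x) + s (w - x) * c x * d x) /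
      (1 - k ^ 2 * s x ^ 2 * s (w - x) ^ 2)) 0 x := by
    intro x
    have hD : 1 - k ^ 2 * s x ^ 2 * s (w - x) ^ 2 ≠ 0 :=
      (den_pos hk (hsc x) (hsc (w - x))).ne'
    have := ((((hs x).mul (hc2 x)).mul (hd2 x)).add (((hs2 x).mul (hc x)).mul (hd x))).div
      (((((hs x).pow 2).const_mul (k ^ 2)).mul ((hs2 x).pow 2)).const_sub 1) hD
    refine this.congr_deriv ?_
    rw [div_eq_zero_iff]
    left
    simp only [Pi.mul_apply, Pi.add_apply, Pi.pow_apply]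
    have e1 : c x ^ 2 = 1 - s x ^ 2 := by linarith [hsc x]
    have e2 : c (w - x) ^ 2 = 1 - s (w - x) ^ 2 := by linarith [hsc (w - x)]
    have e3 : d x ^ 2 = 1 - k ^ 2 * s x ^ 2 := by linarith [hsd x]
    have e4 : d (w - x) ^ 2 = 1 - k ^ 2 * s (w - x) ^ 2 := by linarith [hsd (w - x)]
    generalize s (w - x) = s2 at *
    generalize c (w - x) = c2 at *
    generalize d (w - x) = d2 at *
    generalize s x = s1 at *
    generalize c x = c1 at *
    generalize d x = d1 at *
    have p1 : c1 ^ 2 * d1 ^ 2 = (1 - s1 ^ 2) * (1 - k ^ 2 * s1 ^ 2) := by rw [e1, e3]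
    have p2 : c2 ^ 2 * d2 ^ 2 = (1 - s2 ^ 2) * (1 - k ^ 2 * s2 ^ 2) := by rw [e2, e4]
    push_cast
    linear_combination (1 - k ^ 2 * s1 ^ 2 * s2 ^ 2) * s1 * s2 *
      (e4 + k ^ 2 * e2 - e3 - k ^ 2 * e1) - 2 * k ^ 2 * s1 * s2 * (s1 ^ 2 * p2 - s2 ^ 2 * p1)
  have h := const_of_deriv_zero key u w
  have hwu : w - u = v := by rw [hw]; ring
  simp only [sub_self, s0, c0, d0, hwu] at h
  rw [h]; simp

lemma cn_add (hk : k ^ 2 < 1)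
    (hs : ∀ u, HasDerivAt s (c u * d u) u)
    (hc : ∀ u, HasDerivAt c (-(s u * d u)) u)
    (hd : ∀ u, HasDerivAt d (-(k ^ 2 * s u * c u)) u)
    (hsc : ∀ u, s u ^ 2 + c u ^ 2 = 1) (hsd : ∀ u, d u ^ 2 + k ^ 2 * s u ^ 2 = 1)
    (s0 : s 0 = 0) (c0 : c 0 = 1) (u v : ℝ) :
    c (u + v) = (c u * c v - s u * s v * (d u * d v)) / (1 - k ^ 2 * s u ^ 2 * s v ^ 2) := by
  set w := u + v with hw
  have hv : ∀ x : ℝ, HasDerivAt (fun x => w - x) (-1) x := fun x => by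
    simpa using (hasDerivAt_id x).const_sub w
  have hs2 : ∀ x, HasDerivAt (fun x => s (w - x)) (c (w - x) * d (w - x) * (-1)) x :=
    fun x => (hs (w - x)).comp x (hv x)
  have hc2 : ∀ x, HasDerivAt (fun x => c (w - x)) (-(s (w - x) * d (w - x)) * (-1)) x :=
    fun x => (hc (w - x)).comp x (hv x)
  have hd2 : ∀ x, HasDerivAt (fun x => d (w - x)) (-(k ^ 2 * s (w - x) * c (w - x)) * (-1)) x :=
    fun x => (hd (w - x)).comp x (hv x)
  have key : ∀ x, HasDerivAt (fun x => (c x * c (w - x) - s x * s (w - x) * (d x * d (w - x))) /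
      (1 - k ^ 2 * s x ^ 2 * s (w - x) ^ 2)) 0 x := by
    intro x
    have hD : 1 - k ^ 2 * s x ^ 2 * s (w - x) ^ 2 ≠ 0 :=
      (den_pos hk (hsc x) (hsc (w - x))).ne'
    have := (((hc x).mul (hc2 x)).sub (((hs x).mul (hs2 x)).mul ((hd x).mul (hd2 x)))).div
      (((((hs x).pow 2).const_mul (k ^ 2)).mul ((hs2 x).pow 2)).const_sub 1) hD
    refine this.congr_deriv ?_
    rw [div_eq_zero_iff]
    left
    simp only [Pi.mul_apply, Pi.sub_apply, Pi.pow_apply]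
    have e1 : c x ^ 2 = 1 - s x ^ 2 := by linarith [hsc x]
    have e2 : c (w - x) ^ 2 = 1 - s (w - x) ^ 2 := by linarith [hsc (w - x)]
    have e3 : d x ^ 2 = 1 - k ^ 2 * s x ^ 2 := by linarith [hsd x]
    have e4 : d (w - x) ^ 2 = 1 - k ^ 2 * s (w - x) ^ 2 := by linarith [hsd (w - x)]
    generalize s (w - x) = s2 at *
    generalize c (w - x) = c2 at *
    generalize d (w - x) = d2 at *
    generalize s x = s1 at *
    generalize c x = c1 at *
    generalize d x = d1 at *
    push_cast
    linear_combination (1 - k ^ 2 * s1 ^ 2 * s2 ^ 2) *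
      (s1 * d1 * c2 * e4 - c1 * s2 * d2 * e3) - 2 * k ^ 2 * s1 * s2 *
      (s1 * c1 * d2 * (e2 + s2 ^ 2 * e3) - s2 * c2 * d1 * (e1 + s1 ^ 2 * e4))
  have h := const_of_deriv_zero key u w
  have hwu : w - u = v := by rw [hw]; ring
  simp only [sub_self, s0, c0, hwu] at h
  rw [h]; simp

end JacobiAddition

section Elliptic

variable {e : ℝ}

lemma rad_pos (h : e ^ 2 < 1) (x : ℝ) : 0 < 1 - e ^ 2 * sin x ^ 2 := by
  nlinarith [sin_sq_le_one x, sq_nonneg e, sq_nonneg (sin x)]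

lemma ell_cont (h : e ^ 2 < 1) : Continuous fun τ : ℝ => 1 / √(1 - e ^ 2 * sin τ ^ 2) := by
  refine Continuous.div continuous_const (by fun_prop) fun x => ?_
  exact (sqrt_pos.2 (rad_pos h x)).ne'

lemma ellF_deriv (h : e ^ 2 < 1) (x : ℝ) :
    HasDerivAt (fun φ => ellF φ e) (1 / √(1 - e ^ 2 * sin x ^ 2)) x :=
  intervalIntegral.integral_hasDerivAt_right ((ell_cont h).intervalIntegrable _ _)
    ((ell_cont h).stronglyMeasurableAtFilter _ _) (ell_cont h).continuousAt

lemma ellF_zero : ellF 0 e = 0 := by simp [ellF]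

lemma ellF_cont (h : e ^ 2 < 1) : Continuous (fun φ => ellF φ e) :=
  continuous_iff_continuousAt.2 fun x => (ellF_deriv h x).continuousAt

lemma ellF_sub_mono (h : e ^ 2 < 1) : Monotone (fun φ => ellF φ e - φ) := by
  have hd : ∀ x, HasDerivAt (fun φ => ellF φ e - φ) (1 / √(1 - e ^ 2 * sin x ^ 2) - 1) x :=
    fun x => (ellF_deriv h x).sub (hasDerivAt_id x)
  refine monotone_of_deriv_nonneg (fun x => (hd x).differentiableAt) fun x => ?_
  rw [(hd x).deriv]
  have h0 := sqrt_pos.2 (rad_pos h x)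
  have h1 : √(1 - e ^ 2 * sin x ^ 2) ≤ 1 := by
    rw [sqrt_le_iff]; constructor <;> nlinarith [mul_nonneg (sq_nonneg e) (sq_nonneg (sin x))]
  have := (one_le_div h0).2 h1
  linarith

lemma ellF_strictMono (h : e ^ 2 < 1) : StrictMono (fun φ => ellF φ e) := by
  intro x y hxy
  have := ellF_sub_mono h hxy.le
  simp only at this ⊢
  linarith

lemma ellF_surj (h : e ^ 2 < 1) : Function.Surjective (fun φ => ellF φ e) := by
  refine (ellF_cont h).surjective ?_ ?_
  · refine Filter.tendsto_atTop_mono' _ ?_ Filter.tendsto_id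
    filter_upwards [Filter.eventually_ge_atTop 0] with x hx
    have := ellF_sub_mono h hx
    simp only [ellF_zero] at this
    simp only [id]; linarith
  · refine Filter.tendsto_atBot_mono' _ ?_ Filter.tendsto_id
    filter_upwards [Filter.eventually_le_atBot 0] with x hx
    have := ellF_sub_mono h hx
    simp only [ellF_zero] at this
    simp only [id]; linarith

lemma ellF_neg (x : ℝ) : ellF (-x) e = - ellF x e := by
  unfold ellF
  have := intervalIntegral.integral_comp_neg (a := 0) (b := x)
    (fun τ => 1 / √(1 - e ^ 2 * sin τ ^ 2))
  simp only [sin_neg, neg_sq, neg_zero] at this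
  rw [this, intervalIntegral.integral_symm]

lemma ellF_add_pi (h : e ^ 2 < 1) (x : ℝ) : ellF (x + π) e = ellF x e + 2 * ellK e := by
  have hper : Function.Periodic (fun τ : ℝ => 1 / √(1 - e ^ 2 * sin τ ^ 2)) π := by
    intro τ; simp [sin_add_pi]
  have hi := fun a b => (ell_cont h).intervalIntegrable (μ := MeasureTheory.volume) a b
  have h1 := hper.intervalIntegral_add_eq x (-(π / 2))
  have h2 : -(π / 2) + π = π / 2 := by ring
  have h3 := intervalIntegral.integral_add_adjacent_intervals (hi 0 x) (hi x (x + π))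
  have h4 := intervalIntegral.integral_interval_sub_left (hi 0 (π / 2)) (hi 0 (-(π / 2)))
  have h5 := ellF_neg (e := e) (π / 2)
  rw [h2] at h1
  unfold ellK
  unfold ellF at *
  linarith

lemma ellF_add_two_pi (h : e ^ 2 < 1) (x : ℝ) :
    ellF (x + 2 * π) e = ellF x e + 4 * ellK e := by
  rw [show x + 2 * π = x + π + π by ring, ellF_add_pi h, ellF_add_pi h]; ring

lemma ellK_pos (h : e ^ 2 < 1) : 0 < ellK e := by
  have := ellF_strictMono h (show (0:ℝ) < π / 2 by positivity)
  simp only [ellF_zero] at this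
  exact this

/-- The Jacobi amplitude and its basic properties. -/
lemma exists_am (h : e ^ 2 < 1) : ∃ am : ℝ → ℝ, Continuous am ∧ StrictMono am ∧
    (∀ u, ellF (am u) e = u) ∧ (∀ x, am (ellF x e) = x) ∧
    (∀ u, HasDerivAt am (√(1 - e ^ 2 * sin (am u) ^ 2)) u) ∧
    (∀ u, am (u + 4 * ellK e) = am u + 2 * π) := by
  let o := StrictMono.orderIsoOfSurjective _ (ellF_strictMono h) (ellF_surj h)
  have r : ∀ u, ellF (o.symm u) e = u := fun u => o.apply_symm_apply u
  have l : ∀ x, o.symm (ellF x e) = x := fun u => o.symm_apply_apply u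
  refine ⟨o.symm, o.symm.continuous, o.symm.strictMono, r, l, fun u => ?_, fun u => ?_⟩
  · have h0 := sqrt_pos.2 (rad_pos h (o.symm u))
    have := HasDerivAt.of_local_left_inverse (f := fun φ => ellF φ e) (g := o.symm) (a := u)
      o.symm.continuous.continuousAt (ellF_deriv h (o.symm u)) (by positivity)
      (Filter.Eventually.of_forall r)
    simpa using this
  · apply (ellF_strictMono h).injective
    simp only
    rw [r, ellF_add_two_pi h, r]

lemma am_tendsto (h : e ^ 2 < 1) (am : ℝ → ℝ) (hc : Continuous am)
    (hp : ∀ u, am (u + 4 * ellK e) = am u + 2 * π) (a : ℝ) :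
    Filter.Tendsto (fun n : ℕ => am (n * a) / (2 * π) / n) Filter.atTop
      (nhds (a / (4 * ellK e))) := by
  have hK := ellK_pos h
  let g : ℝ → ℝ := fun u => am u / (2 * π) - u / (4 * ellK e)
  have hg : Continuous g := by fun_prop
  have hgp : Function.Periodic g (4 * ellK e) := by
    intro u
    simp only [g, hp]
    field_simp
    ring
  obtain ⟨C, hC⟩ := (hgp.isBounded_of_continuous (by positivity) hg).exists_norm_le
  have h1 : Filter.Tendsto (fun n : ℕ => g (n * a) / n) Filter.atTop (nhds 0) := by
    refine squeeze_zero_norm (a := fun n : ℕ => C / n) (fun n => ?_)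
      (tendsto_const_div_atTop_nhds_zero_nat C)
    rw [norm_div, Real.norm_natCast]
    gcongr
    exact hC _ ⟨_, rfl⟩
  have h2 := h1.add_const (a / (4 * ellK e))
  rw [zero_add] at h2
  refine h2.congr' ?_
  filter_upwards [Filter.eventually_gt_atTop 0] with n hn
  have : (n : ℝ) ≠ 0 := by positivity
  simp only [g]
  field_simp
  ring

lemma jacobi_add (h : e ^ 2 < 1) (am : ℝ → ℝ) (l : ∀ x, am (ellF x e) = x)
    (hd : ∀ u, HasDerivAt am (√(1 - e ^ 2 * sin (am u) ^ 2)) u) (u v : ℝ) :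
    sin (am (u + v)) = (sin (am u) * cos (am v) * √(1 - e ^ 2 * sin (am v) ^ 2) +
        sin (am v) * cos (am u) * √(1 - e ^ 2 * sin (am u) ^ 2)) /
        (1 - e ^ 2 * sin (am u) ^ 2 * sin (am v) ^ 2) ∧
    cos (am (u + v)) = (cos (am u) * cos (am v) - sin (am u) * sin (am v) *
        (√(1 - e ^ 2 * sin (am u) ^ 2) * √(1 - e ^ 2 * sin (am v) ^ 2))) /
        (1 - e ^ 2 * sin (am u) ^ 2 * sin (am v) ^ 2) := by
  have a0 : am 0 = 0 := by have := l 0; rwa [ellF_zero] at this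
  have hs : ∀ u, HasDerivAt (fun u => sin (am u))
      (cos (am u) * √(1 - e ^ 2 * sin (am u) ^ 2)) u := fun u => (hd u).sin
  have hc : ∀ u, HasDerivAt (fun u => cos (am u))
      (-(sin (am u) * √(1 - e ^ 2 * sin (am u) ^ 2))) u := fun u => by
    simpa using (hd u).cos
  have hdd : ∀ u, HasDerivAt (fun u => √(1 - e ^ 2 * sin (am u) ^ 2))
      (-(e ^ 2 * sin (am u) * cos (am u))) u := fun u => by
    have h0 := sqrt_pos.2 (rad_pos h (am u))
    have := ((((hs u).pow 2).const_mul (e ^ 2)).const_sub 1).sqrt (rad_pos h (am u)).ne'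
    refine this.congr_deriv ?_
    simp only [Pi.pow_apply]
    field_simp
    push_cast
    ring
  have hsc : ∀ u, sin (am u) ^ 2 + cos (am u) ^ 2 = 1 := fun u => sin_sq_add_cos_sq _
  have hsd : ∀ u, √(1 - e ^ 2 * sin (am u) ^ 2) ^ 2 + e ^ 2 * sin (am u) ^ 2 = 1 := fun u => by
    rw [sq_sqrt (rad_pos h (am u)).le]; ring
  constructor
  · exact sn_add (s := fun u => sin (am u)) (c := fun u => cos (am u))
      (d := fun u => √(1 - e ^ 2 * sin (am u) ^ 2)) h hs hc hdd hsc hsd (by simp [a0])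
      (by simp [a0]) (by simp [a0]) u v
  · exact cn_add (s := fun u => sin (am u)) (c := fun u => cos (am u))
      (d := fun u => √(1 - e ^ 2 * sin (am u) ^ 2)) h hs hc hdd hsc hsd (by simp [a0])
      (by simp [a0]) u v

end Elliptic

/-- The values of `sn`, `cn`, `dn` at twice `F(ω̂)`. -/
lemma double_values (e f : ℝ) (hf : 0 < f) (hfe : f < e) (he : e < 1) (h : e ^ 2 < 1)
    (am : ℝ → ℝ) (l : ∀ x, am (ellF x e) = x)
    (hd : ∀ u, HasDerivAt am (√(1 - e ^ 2 * sin (am u) ^ 2)) u) :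
    0 < e ^ 2 - f ^ 4 ∧
    sin (am (2 * ellF (omegaHat e f) e)) =
      2 * f * √((1 - f ^ 2) * (e ^ 2 - f ^ 2)) / (e ^ 2 - f ^ 4) ∧
    cos (am (2 * ellF (omegaHat e f) e)) =
      -(e ^ 2 + f ^ 4 - 2 * f ^ 2) / (e ^ 2 - f ^ 4) ∧
    √(1 - e ^ 2 * sin (am (2 * ellF (omegaHat e f) e)) ^ 2) =
      (e ^ 2 * (1 - 2 * f ^ 2) + f ^ 4) / (e ^ 2 - f ^ 4) := by
  have he0 : 0 < e := hf.trans hfe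
  have hf1 : 0 < 1 - f ^ 2 := by nlinarith
  have hef : 0 < e ^ 2 - f ^ 2 := by nlinarith
  have he1 : 0 < 1 - e ^ 2 := by linarith
  have hA2 : 0 < e ^ 2 - f ^ 4 := by nlinarith [mul_pos (pow_pos hf 2) hf1]
  have hA4 : 0 < e ^ 2 * (1 - 2 * f ^ 2) + f ^ 4 := by
    nlinarith [sq_nonneg (e ^ 2 - f ^ 2), mul_pos (pow_pos he0 2) he1]
  -- square roots as atoms
  obtain ⟨p, hp, hp2⟩ : ∃ p, 0 < p ∧ p ^ 2 = 1 - f ^ 2 :=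
    ⟨√(1 - f ^ 2), sqrt_pos.2 hf1, sq_sqrt hf1.le⟩
  obtain ⟨q, hq, hq2⟩ : ∃ q, 0 < q ∧ q ^ 2 = e ^ 2 - f ^ 2 :=
    ⟨√(e ^ 2 - f ^ 2), sqrt_pos.2 hef, sq_sqrt hef.le⟩
  obtain ⟨r, hr, hr2⟩ : ∃ r, 0 < r ∧ r ^ 2 = 1 - e ^ 2 :=
    ⟨√(1 - e ^ 2), sqrt_pos.2 he1, sq_sqrt he1.le⟩
  have hpq : √((1 - f ^ 2) * (e ^ 2 - f ^ 2)) = p * q := by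
    rw [← hp2, ← hq2, ← mul_pow, sqrt_sq (by positivity)]
  have hsq : √((e ^ 2 - f ^ 2) / (e ^ 2 * (1 - f ^ 2))) = q / (e * p) := by
    rw [← hp2, ← hq2, ← mul_pow, ← div_pow, sqrt_sq (by positivity)]
  have hle : q / (e * p) ≤ 1 := by
    rw [div_le_one (by positivity)]
    apply le_of_sq_le_sq _ (by positivity)
    rw [mul_pow, hp2, hq2]
    nlinarith [mul_pos (pow_pos hf 2) he1]
  have hsin : sin (omegaHat e f) = q / (e * p) := by
    unfold omegaHat
    rw [hsq, sin_arcsin _ hle]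
    have : 0 ≤ q / (e * p) := by positivity
    linarith
  have hcos : cos (omegaHat e f) = f * r / (e * p) := by
    unfold omegaHat
    rw [hsq, cos_arcsin, sqrt_eq_iff_eq_sq]
    · field_simp
      rw [hp2, hq2, hr2]; ring
    · have : 0 ≤ q / (e * p) := by positivity
      nlinarith
    · positivity
  have hdn : √(1 - e ^ 2 * sin (omegaHat e f) ^ 2) = r / p := by
    rw [hsin, sqrt_eq_iff_eq_sq _ (by positivity)]
    · field_simp
      rw [hp2, hq2, hr2]; ring
    · rw [← hsin]; exact (rad_pos h _).le
  have hden : 1 - e ^ 2 * (q / (e * p)) ^ 2 * (q / (e * p)) ^ 2 =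
      r ^ 2 * (e ^ 2 - f ^ 4) / (e * p ^ 2) ^ 2 := by
    have : (p ^ 2) ^ 2 * e ^ 2 - (q ^ 2) ^ 2 = r ^ 2 * (e ^ 2 - f ^ 4) := by
      rw [hp2, hq2, hr2]; ring
    field_simp
    linear_combination this
  obtain ⟨hS, hC⟩ := jacobi_add h am l hd (ellF (omegaHat e f) e) (ellF (omegaHat e f) e)
  rw [← two_mul, l, hdn, hsin, hcos, hden] at hS hC
  have hS' : sin (am (2 * ellF (omegaHat e f) e)) =
      2 * f * √((1 - f ^ 2) * (e ^ 2 - f ^ 2)) / (e ^ 2 - f ^ 4) := by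
    rw [hS, hpq]
    field_simp
    ring
  refine ⟨hA2, hS', ?_, ?_⟩
  · rw [hC]
    have : f ^ 2 * p ^ 2 - q ^ 2 = -(e ^ 2 + f ^ 4 - 2 * f ^ 2) := by
      rw [hp2, hq2]; ring
    rw [← this]
    field_simp
    try ring
  · rw [hS', hpq, sqrt_eq_iff_eq_sq _ (by positivity)]
    · field_simp
      rw [hp2, hq2]; ring
    · have := rad_pos h (am (2 * ellF (omegaHat e f) e))
      rw [hS', hpq] at this
      exact this.le

lemma poncelet_am (e f : ℝ) (hf : 0 < f) (hfe : f < e) (he : e < 1) (h : e ^ 2 < 1)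
    (am : ℝ → ℝ) (l : ∀ x, am (ellF x e) = x)
    (hd : ∀ u, HasDerivAt am (√(1 - e ^ 2 * sin (am u) ^ 2)) u) (x : ℝ) :
    poncelet e f (cos x, sin x) =
      (cos (am (ellF x e + 2 * ellF (omegaHat e f) e)),
        sin (am (ellF x e + 2 * ellF (omegaHat e f) e))) := by
  obtain ⟨hA2, h1, h2, h3⟩ := double_values e f hf hfe he h am l hd
  obtain ⟨hS, hC⟩ := jacobi_add h am l hd (ellF x e) (2 * ellF (omegaHat e f) e)
  have hpos := den_pos h (sin_sq_add_cos_sq x)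
    (sin_sq_add_cos_sq (am (2 * ellF (omegaHat e f) e)))
  rw [h3, l, h2, h1] at hS hC
  rw [h1] at hpos
  rw [hS, hC]
  unfold poncelet
  simp only
  generalize 2 * f * √((1 - f ^ 2) * (e ^ 2 - f ^ 2)) = A1 at *
  generalize e ^ 2 - f ^ 4 = A2 at *
  generalize e ^ 2 + f ^ 4 - 2 * f ^ 2 = A3 at *
  generalize e ^ 2 * (1 - 2 * f ^ 2) + f ^ 4 = A4 at *
  have hD : 1 - e ^ 2 * sin x ^ 2 * (A1 / A2) ^ 2 =
      (A2 ^ 2 - A1 ^ 2 * e ^ 2 * sin x ^ 2) / A2 ^ 2 := by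
    field_simp
  rw [hD] at hpos ⊢
  have hD2 : A2 ^ 2 - A1 ^ 2 * e ^ 2 * sin x ^ 2 ≠ 0 := by
    intro h0; rw [h0] at hpos; simp at hpos
  generalize A2 ^ 2 - A1 ^ 2 * e ^ 2 * sin x ^ 2 = D at *
  generalize √(1 - e ^ 2 * sin x ^ 2) = R at *
  ext
  · simp only
    field_simp
    ring
  · simp only
    field_simp
    ring

/-- for `0 < f < e < 1`, the standard Poncelet map `P_e^f` maps the unit
circle to itself and admits a continuous strictly increasing lift `L` with
`L(θ+1) = L(θ)+1`, whose translation number is the billiard rotation number `ρ̂(e,f)`. -/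
theorem poncelet_lift_and_rotation_number (e f : ℝ)
    (hf : 0 < f) (hfe : f < e) (he : e < 1) :
    (∀ X Y : ℝ, X ^ 2 + Y ^ 2 = 1 →
      (poncelet e f (X, Y)).1 ^ 2 + (poncelet e f (X, Y)).2 ^ 2 = 1) ∧
    ∃ L : ℝ → ℝ, Continuous L ∧ StrictMono L ∧
      (∀ θ : ℝ, L (θ + 1) = L θ + 1) ∧
      (∀ θ : ℝ, poncelet e f (Real.cos (2 * Real.pi * θ), Real.sin (2 * Real.pi * θ)) =
        (Real.cos (2 * Real.pi * L θ), Real.sin (2 * Real.pi * L θ))) ∧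
      Filter.Tendsto (fun n : ℕ => L^[n] 0 / n) Filter.atTop (nhds (rhoHat e f)) := by
  have he0 : 0 < e := hf.trans hfe
  have h : e ^ 2 < 1 := by nlinarith
  obtain ⟨am, hc, hm, r, l, hd, hp⟩ := exists_am h
  have hP := poncelet_am e f hf hfe he h am l hd
  have h2pi : (0:ℝ) < 2 * π := by positivity
  refine ⟨fun X Y hXY => ?_, ?_⟩
  · obtain ⟨x, hx, hy⟩ : ∃ x, cos x = X ∧ sin x = Y := by
      have hn : ‖(⟨X, Y⟩ : ℂ)‖ = 1 := by
        rw [Complex.norm_def, Complex.normSq_mk, ← sq, ← sq, hXY, sqrt_one]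
      have hne : (⟨X, Y⟩ : ℂ) ≠ 0 := by
        intro h0; rw [h0] at hn; simp at hn
      refine ⟨Complex.arg ⟨X, Y⟩, ?_, ?_⟩
      · rw [Complex.cos_arg hne, hn]; simp
      · rw [Complex.sin_arg, hn]; simp
    rw [← hx, ← hy, hP]
    exact cos_sq_add_sin_sq _
  · set a := 2 * ellF (omegaHat e f) e with ha
    let L : ℝ → ℝ := fun θ => am (ellF (2 * π * θ) e + a) / (2 * π)
    have hL : ∀ θ, 2 * π * L θ = am (ellF (2 * π * θ) e + a) := fun θ => by
      simp only [L]; field_simp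
    refine ⟨L, ?_, ?_, ?_, ?_, ?_⟩
    · have := (ellF_cont h).comp (continuous_const.mul continuous_id : Continuous fun θ : ℝ => 2 * π * θ)
      exact (hc.comp (this.add continuous_const)).div_const _
    · intro x y hxy
      have h1 : 2 * π * x < 2 * π * y := by gcongr
      have h2 := ellF_strictMono h h1
      have h3 : am (ellF (2 * π * x) e + a) < am (ellF (2 * π * y) e + a) :=
        hm (by simp only at h2; linarith)
      simp only [L]
      gcongr
    · intro θ
      simp only [L]
      rw [mul_add, mul_one, ellF_add_two_pi h, add_right_comm, hp]
      field_simp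
    · intro θ
      rw [hP, hL]
    · have hit : ∀ n : ℕ, L^[n] 0 = am (n * a) / (2 * π) := by
        intro n
        induction n with
        | zero =>
          have := l 0
          rw [ellF_zero] at this
          simp [this]
        | succ n ih =>
          rw [Function.iterate_succ_apply', ih]
          simp only [L]
          rw [mul_div_cancel₀ _ h2pi.ne', r]
          push_cast
          rw [add_mul, one_mul]
      simp only [hit]
      have hK := ellK_pos h
      have := am_tendsto h am hc hp a
      have hrho : rhoHat e f = a / (4 * ellK e) := by
        rw [ha]; unfold rhoHat; field_simp; norm_num
      rw [hrho]
      exact this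
end

section
/- Let C1, C2 be real symmetric 3×3 matrices satisfying the standing assumptions, with eigenvalues λ1 > λ2 > λ3 > 0 of C1⁻¹C2, let e = √((λ1−λ2)/(λ1−λ3)), and let ν = (ν1,ν2) and μ = (μ1,μ2) be valid parameters. Define ρ(ν) = F(arcsin √((λ1−λ3)ν2/(λ1ν2+ν1)), e)/(2K(e)) and ρ(μ) analogously. Then the following are equivalent: (1) every point (x,y) ∈ ℝ² with (x,y,1)C_μ(x,y,1)ᵀ = 0 satisfies (x,y,1)C_ν(x,y,1)ᵀ < 0 (i.e. the ellipse C_μ lies in the interior of the ellipse C_ν); (2) ν1μ2 − ν2μ1 > 0; (3) ρ(μ) > ρ(ν). -/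
open Real Matrix Polynomial

/-- Standing assumption (SA1): symmetric, positive definite upper-left 2×2 block,
negative determinant. -/
def SA1 (C : Matrix (Fin 3) (Fin 3) ℝ) : Prop :=
  C.IsSymm ∧ (∀ x y : ℝ, (x, y) ≠ (0, 0) → 0 < ![x, y, 0] ⬝ᵥ C.mulVec ![x, y, 0]) ∧
    C.det < 0

lemma aux_eig (C1 C2 : Matrix (Fin 3) (Fin 3) ℝ) (l : ℝ) (h1 : C1.det ≠ 0)
    (h : (C1⁻¹ * C2).charpoly.eval l = 0) :
    ∃ v : Fin 3 → ℝ, v ≠ 0 ∧ (C1⁻¹ * C2) *ᵥ v = l • v ∧ C2 *ᵥ v = l • (C1 *ᵥ v) := by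
  rw [Matrix.eval_charpoly] at h
  obtain ⟨v, hv, hv0⟩ := Matrix.exists_mulVec_eq_zero_iff.mpr h
  have hA : (C1⁻¹ * C2) *ᵥ v = l • v := by
    rw [Matrix.sub_mulVec, sub_eq_zero] at hv0
    rw [← hv0]
    simp [Matrix.scalar_apply, ← Matrix.smul_one_eq_diagonal, Matrix.smul_mulVec]
  refine ⟨v, hv, hA, ?_⟩
  have hu : IsUnit C1.det := isUnit_iff_ne_zero.mpr h1
  have := congrArg (fun w => C1 *ᵥ w) hA
  simpa [Matrix.mulVec_mulVec, ← Matrix.mul_assoc, Matrix.mul_nonsing_inv _ hu,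
    Matrix.mulVec_smul] using this

lemma aux_symm (C : Matrix (Fin 3) (Fin 3) ℝ) (h : C.IsSymm) (u v : Fin 3 → ℝ) :
    u ⬝ᵥ C *ᵥ v = v ⬝ᵥ C *ᵥ u := by
  rw [Matrix.dotProduct_mulVec, dotProduct_comm, ← Matrix.mulVec_transpose, h.eq]

lemma aux_orth (C1 C2 : Matrix (Fin 3) (Fin 3) ℝ) (h1 : C1.IsSymm) (h2 : C2.IsSymm)
    (a b : ℝ) (hab : a ≠ b) (u v : Fin 3 → ℝ) (hu : C2 *ᵥ u = a • (C1 *ᵥ u))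
    (hv : C2 *ᵥ v = b • (C1 *ᵥ v)) : u ⬝ᵥ C1 *ᵥ v = 0 := by
  have := aux_symm C2 h2 u v
  rw [hu, hv, dotProduct_smul, dotProduct_smul, aux_symm C1 h1 v u, smul_eq_mul, smul_eq_mul]
    at this
  have h : (b - a) * (u ⬝ᵥ C1 *ᵥ v) = 0 := by linarith
  rcases mul_eq_zero.mp h with h | h
  · exact absurd (by linarith) hab
  · exact h

lemma aux_diag (C1 C2 : Matrix (Fin 3) (Fin 3) ℝ) (l1 l2 l3 : ℝ)
    (hC1 : SA1 C1) (hC2 : SA1 C2)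
    (h12 : l2 < l1) (h23 : l3 < l2) (h3 : 0 < l3)
    (hchar : (C1⁻¹ * C2).charpoly =
      (X - Polynomial.C l1) * (X - Polynomial.C l2) * (X - Polynomial.C l3))
    (hSA3 : ∀ u : Fin 3 → ℝ, u ≠ 0 → u ⬝ᵥ C2.mulVec u = 0 → u ⬝ᵥ C1.mulVec u < 0) :
    ∃ (P : (Fin 3 → ℝ) ≃ₗ[ℝ] (Fin 3 → ℝ)) (d1 d2 d3 : ℝ), 0 < d1 ∧ 0 < d2 ∧ d3 < 0 ∧
      (∀ w, P w ⬝ᵥ C1 *ᵥ (P w) = d1 * w 0 ^ 2 + d2 * w 1 ^ 2 + d3 * w 2 ^ 2) ∧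
      (∀ w, P w ⬝ᵥ C2 *ᵥ (P w) = l1 * d1 * w 0 ^ 2 + l2 * d2 * w 1 ^ 2 + l3 * d3 * w 2 ^ 2) := by
  obtain ⟨s1, p1, n1⟩ := hC1
  obtain ⟨s2, -, -⟩ := hC2
  obtain ⟨v1, nz1, A1, e1⟩ := aux_eig C1 C2 l1 n1.ne (by simp [hchar])
  obtain ⟨v2, nz2, A2, e2⟩ := aux_eig C1 C2 l2 n1.ne (by simp [hchar])
  obtain ⟨v3, nz3, A3, e3⟩ := aux_eig C1 C2 l3 n1.ne (by simp [hchar])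
  have o12 := aux_orth C1 C2 s1 s2 l1 l2 (by linarith) v1 v2 e1 e2
  have o13 := aux_orth C1 C2 s1 s2 l1 l3 (by linarith) v1 v3 e1 e3
  have o23 := aux_orth C1 C2 s1 s2 l2 l3 (by linarith) v2 v3 e2 e3
  have o21 := aux_orth C1 C2 s1 s2 l2 l1 (by linarith) v2 v1 e2 e1
  have o31 := aux_orth C1 C2 s1 s2 l3 l1 (by linarith) v3 v1 e3 e1
  have o32 := aux_orth C1 C2 s1 s2 l3 l2 (by linarith) v3 v2 e3 e2
  have li : LinearIndependent ℝ ![v1, v2, v3] := by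
    refine Module.End.eigenvectors_linearIndependent' (Matrix.mulVecLin (C1⁻¹ * C2))
      ![l1, l2, l3] ?_ _ ?_
    · intro i j hij
      fin_cases i <;> fin_cases j <;> simp at hij ⊢ <;> linarith
    · intro i
      fin_cases i
      · exact ⟨Module.End.mem_eigenspace_iff.mpr A1, nz1⟩
      · exact ⟨Module.End.mem_eigenspace_iff.mpr A2, nz2⟩
      · exact ⟨Module.End.mem_eigenspace_iff.mpr A3, nz3⟩
  set M : Matrix (Fin 3) (Fin 3) ℝ := Matrix.of ![v1, v2, v3] with hM
  have hMu : IsUnit M := Matrix.linearIndependent_rows_iff_isUnit.mp li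
  have hMd : M.det ≠ 0 := ((Matrix.isUnit_iff_isUnit_det M).mp hMu).ne_zero
  have hTu : IsUnit (Mᵀ).det := by rw [Matrix.det_transpose]; exact isUnit_iff_ne_zero.mpr hMd
  obtain ⟨d1, hd1⟩ : ∃ d, d = v1 ⬝ᵥ C1 *ᵥ v1 := ⟨_, rfl⟩
  obtain ⟨d2, hd2⟩ : ∃ d, d = v2 ⬝ᵥ C1 *ᵥ v2 := ⟨_, rfl⟩
  obtain ⟨d3, hd3⟩ : ∃ d, d = v3 ⬝ᵥ C1 *ᵥ v3 := ⟨_, rfl⟩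
  have hD : M * C1 * Mᵀ = Matrix.diagonal ![d1, d2, d3] := by
    ext i j
    have : (M * C1 * Mᵀ) i j = M i ⬝ᵥ C1 *ᵥ (M j) := by
      rw [Matrix.dotProduct_mulVec]; rfl
    rw [this]
    fin_cases i <;> fin_cases j <;> simp [hM, Matrix.diagonal] <;>
      first | assumption | exact hd1.symm | exact hd2.symm | exact hd3.symm
  have hdet : d1 * d2 * d3 < 0 := by
    have h := congrArg Matrix.det hD
    rw [Matrix.det_mul, Matrix.det_mul, Matrix.det_transpose, Matrix.det_diagonal,
      Fin.prod_univ_three] at h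
    simp at h
    rw [← h]
    have := mul_pos_of_neg_of_neg n1 (neg_lt_zero.mpr (pow_pos (abs_pos.mpr hMd) 2))
    rw [sq_abs] at this
    nlinarith
  let P : (Fin 3 → ℝ) ≃ₗ[ℝ] (Fin 3 → ℝ) := Matrix.toLinearEquiv' Mᵀ
    (Matrix.invertibleOfIsUnitDet _ hTu)
  have hP : ∀ w, P w = w 0 • v1 + w 1 • v2 + w 2 • v3 := by
    intro w
    have : P w = Mᵀ *ᵥ w := rfl
    rw [this]
    ext i
    simp [Matrix.mulVec, dotProduct, Fin.sum_univ_three, hM]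
    ring
  have q1 : ∀ w, P w ⬝ᵥ C1 *ᵥ (P w) = d1 * w 0 ^ 2 + d2 * w 1 ^ 2 + d3 * w 2 ^ 2 := by
    intro w
    rw [hP]
    simp only [Matrix.mulVec_add, Matrix.mulVec_smul, add_dotProduct, dotProduct_add,
      smul_dotProduct, dotProduct_smul, smul_eq_mul, o12, o13, o23, o21, o31, o32,
      ← hd1, ← hd2, ← hd3]
    ring
  have q2 : ∀ w, P w ⬝ᵥ C2 *ᵥ (P w) =
      l1 * d1 * w 0 ^ 2 + l2 * d2 * w 1 ^ 2 + l3 * d3 * w 2 ^ 2 := by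
    intro w
    rw [hP]
    simp only [Matrix.mulVec_add, Matrix.mulVec_smul, add_dotProduct, dotProduct_add, e1, e2, e3,
      smul_dotProduct, dotProduct_smul, smul_eq_mul, o12, o13, o23, o21, o31, o32,
      ← hd1, ← hd2, ← hd3]
    ring
  have key : ∀ w : Fin 3 → ℝ, w ≠ 0 →
      l1 * d1 * w 0 ^ 2 + l2 * d2 * w 1 ^ 2 + l3 * d3 * w 2 ^ 2 = 0 →
      d1 * w 0 ^ 2 + d2 * w 1 ^ 2 + d3 * w 2 ^ 2 < 0 := by
    intro w hw h
    rw [← q1]; rw [← q2] at h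
    exact hSA3 _ (by simpa using hw) h
  have notneg : ¬ (d1 < 0 ∧ d2 < 0 ∧ d3 < 0) := by
    rintro ⟨a, b, c⟩
    have h := p1 1 0 (by simp)
    have h2 := q1 (P.symm ![1, 0, 0])
    rw [P.apply_symm_apply] at h2
    nlinarith [sq_nonneg (P.symm ![1, 0, 0] 0), sq_nonneg (P.symm ![1, 0, 0] 1),
      sq_nonneg (P.symm ![1, 0, 0] 2)]
  have c1 : ¬ (d1 < 0 ∧ 0 < d3) := by
    rintro ⟨a, c⟩
    have hr : 0 ≤ -(l1 * d1) / (l3 * d3) := by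
      apply div_nonneg _ (by positivity)
      nlinarith
    have h := key ![1, 0, √(-(l1 * d1) / (l3 * d3))] (by intro h; simpa using congrFun h 0)
    simp [Real.sq_sqrt hr] at h
    have h' := h (by field_simp; ring)
    have : d1 + d3 * (-(l1 * d1) / (l3 * d3)) = d1 * (l3 - l1) / l3 := by field_simp; ring
    rw [this] at h'
    have : 0 < d1 * (l3 - l1) / l3 := div_pos (mul_pos_of_neg_of_neg a (by linarith)) h3
    linarith
  have c2 : ¬ (d2 < 0 ∧ 0 < d3) := by
    rintro ⟨a, c⟩
    have hr : 0 ≤ -(l2 * d2) / (l3 * d3) := by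
      apply div_nonneg _ (by positivity)
      nlinarith
    have h := key ![0, 1, √(-(l2 * d2) / (l3 * d3))] (by intro h; simpa using congrFun h 1)
    simp [Real.sq_sqrt hr] at h
    have h' := h (by field_simp; ring)
    have : d2 + d3 * (-(l2 * d2) / (l3 * d3)) = d2 * (l3 - l2) / l3 := by field_simp; ring
    rw [this] at h'
    have : 0 < d2 * (l3 - l2) / l3 := div_pos (mul_pos_of_neg_of_neg a (by linarith)) h3
    linarith
  refine ⟨P, d1, d2, d3, ?_⟩
  have n1' : d1 ≠ 0 := by rintro rfl; simp at hdet
  have n2' : d2 ≠ 0 := by rintro rfl; simp at hdet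
  have n3' : d3 ≠ 0 := by rintro rfl; simp at hdet
  have : 0 < d1 ∧ 0 < d2 ∧ d3 < 0 := by
    rcases lt_or_gt_of_ne n1' with a | a <;> rcases lt_or_gt_of_ne n2' with b | b <;>
      rcases lt_or_gt_of_ne n3' with c | c
    · exact absurd ⟨a, b, c⟩ notneg
    · exact absurd ⟨a, c⟩ c1
    · exact absurd hdet (not_lt.mpr (mul_pos_of_neg_of_neg (mul_neg_of_neg_of_pos a b) c).le)
    · exact absurd ⟨a, c⟩ c1
    · exact absurd hdet (not_lt.mpr (mul_pos_of_neg_of_neg (mul_neg_of_pos_of_neg a b) c).le)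
    · exact absurd ⟨b, c⟩ c2
    · exact ⟨a, b, c⟩
    · exact absurd hdet (not_lt.mpr (by positivity))
  exact ⟨this.1, this.2.1, this.2.2, q1, q2⟩

lemma aux_F (e : ℝ) (he : e ^ 2 < 1) : StrictMono (fun φ => ellF φ e) := by
  have hpos : ∀ τ : ℝ, 0 < 1 - e ^ 2 * Real.sin τ ^ 2 := by
    intro τ
    nlinarith [Real.sin_sq_le_one τ, sq_nonneg e, sq_nonneg (Real.sin τ)]
  have hc : Continuous (fun τ : ℝ => 1 / Real.sqrt (1 - e ^ 2 * Real.sin τ ^ 2)) :=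
    continuous_const.div (by fun_prop) (fun τ => (Real.sqrt_pos.mpr (hpos τ)).ne')
  intro a b hab
  have h := intervalIntegral.intervalIntegral_pos_of_pos (a := a) (b := b)
    (hc.intervalIntegrable a b) (fun τ => one_div_pos.mpr (Real.sqrt_pos.mpr (hpos τ))) hab
  have h2 := intervalIntegral.integral_add_adjacent_intervals
    (μ := MeasureTheory.volume) (hc.intervalIntegrable 0 a) (hc.intervalIntegrable a b)
  simp only [ellF]
  linarith

/-- Monotonicity: for a pencil with eigenvalues `λ1 > λ2 > λ3 > 0`
and valid parameters `ν`, `μ`, the following are equivalent: `C_μ` lies in the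
interior of `C_ν`; the cross product `ν1 μ2 − ν2 μ1` is positive; and
`ρ(μ) > ρ(ν)`. -/
theorem poncelet_monotonicity (C1 C2 : Matrix (Fin 3) (Fin 3) ℝ) (l1 l2 l3 : ℝ)
    (hC1 : SA1 C1) (hC2 : SA1 C2)
    (h12 : l2 < l1) (h23 : l3 < l2) (h3 : 0 < l3)
    (hchar : (C1⁻¹ * C2).charpoly =
      (X - Polynomial.C l1) * (X - Polynomial.C l2) * (X - Polynomial.C l3))
    (hSA3 : ∀ u : Fin 3 → ℝ, u ≠ 0 → u ⬝ᵥ C2.mulVec u = 0 → u ⬝ᵥ C1.mulVec u < 0)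
    (ν1 ν2 μ1 μ2 : ℝ)
    (hν2 : 0 < ν2) (hν : 0 < ν1 + l3 * ν2)
    (hμ2 : 0 < μ2) (hμ : 0 < μ1 + l3 * μ2) :
    let e := Real.sqrt ((l1 - l2) / (l1 - l3))
    let Cν := ν1 • C1 + ν2 • C2
    let Cμ := μ1 • C1 + μ2 • C2
    let ρν := ellF (Real.arcsin (Real.sqrt ((l1 - l3) * ν2 / (l1 * ν2 + ν1)))) e /
      (2 * ellK e)
    let ρμ := ellF (Real.arcsin (Real.sqrt ((l1 - l3) * μ2 / (l1 * μ2 + μ1)))) e /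
      (2 * ellK e)
    ((∀ x y : ℝ, ![x, y, 1] ⬝ᵥ Cμ.mulVec ![x, y, 1] = 0 →
        ![x, y, 1] ⬝ᵥ Cν.mulVec ![x, y, 1] < 0) ↔ 0 < ν1 * μ2 - ν2 * μ1) ∧
    (0 < ν1 * μ2 - ν2 * μ1 ↔ ρν < ρμ) := by
  intro e Cν Cμ ρν ρμ
  have hq : ∀ (a b : ℝ) (u : Fin 3 → ℝ), u ⬝ᵥ (a • C1 + b • C2) *ᵥ u =
      a * (u ⬝ᵥ C1 *ᵥ u) + b * (u ⬝ᵥ C2 *ᵥ u) := by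
    intro a b u
    simp [Matrix.add_mulVec, Matrix.smul_mulVec, dotProduct_add, dotProduct_smul]
  constructor
  · obtain ⟨P, d1, d2, d3, p1, p2, p3, q1, q2⟩ :=
      aux_diag C1 C2 l1 l2 l3 hC1 hC2 h12 h23 h3 hchar hSA3
    have neg : ∀ u : Fin 3 → ℝ, u ≠ 0 → u ⬝ᵥ Cμ *ᵥ u = 0 → u ⬝ᵥ C1 *ᵥ u < 0 := by
      intro u hu h
      obtain ⟨w, rfl⟩ := P.surjective u
      have hw : w ≠ 0 := by rintro rfl; simp at hu
      rw [hq, q1, q2] at h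
      rw [q1]
      have hs : 0 < d1 * w 0 ^ 2 * (l1 - l3) + d2 * w 1 ^ 2 * (l2 - l3) := by
        have t1 : 0 < d1 * (l1 - l3) := mul_pos p1 (by linarith)
        have t2 : 0 < d2 * (l2 - l3) := mul_pos p2 (by linarith)
        by_cases h0 : w 0 = 0
        · by_cases h1 : w 1 = 0
          · exfalso
            have h2 : w 2 ≠ 0 := by
              intro h2
              apply hw
              ext i
              fin_cases i <;> simpa
            rw [h0, h1] at h
            have : (μ1 + l3 * μ2) * (d3 * w 2 ^ 2) = 0 := by linarith
            simp [hμ.ne', p3.ne, h2] at this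
          · have : 0 < w 1 ^ 2 := by positivity
            nlinarith [mul_pos t2 this, mul_nonneg t1.le (sq_nonneg (w 0))]
        · have : 0 < w 0 ^ 2 := by positivity
          nlinarith [mul_pos t1 this, mul_nonneg t2.le (sq_nonneg (w 1))]
      have : (μ1 + l3 * μ2) * (d1 * w 0 ^ 2 + d2 * w 1 ^ 2 + d3 * w 2 ^ 2) =
        - (μ2 * (d1 * w 0 ^ 2 * (l1 - l3) + d2 * w 1 ^ 2 * (l2 - l3))) := by linarith
      have hm := mul_pos hμ2 hs
      by_contra hcon
      have := mul_nonneg hμ.le (not_lt.mp hcon)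
      linarith
    have rel : ∀ u : Fin 3 → ℝ, u ⬝ᵥ Cμ *ᵥ u = 0 →
        μ2 * (u ⬝ᵥ Cν *ᵥ u) = (ν1 * μ2 - ν2 * μ1) * (u ⬝ᵥ C1 *ᵥ u) := by
      intro u h
      rw [hq] at h ⊢
      linear_combination ν2 * h
    constructor
    · intro h
      -- a point on the conic
      have hm1 : 0 < μ1 + l1 * μ2 := by nlinarith
      have hr : 0 ≤ -((μ1 + l3 * μ2) * d3) / ((μ1 + l1 * μ2) * d1) := by
        apply div_nonneg _ (by positivity)
        nlinarith
      obtain ⟨u, hu0, hu⟩ : ∃ u : Fin 3 → ℝ, u ≠ 0 ∧ u ⬝ᵥ Cμ *ᵥ u = 0 := by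
        refine ⟨P ![√(-((μ1 + l3 * μ2) * d3) / ((μ1 + l1 * μ2) * d1)), 0, 1], ?_, ?_⟩
        · intro h0
          rw [LinearEquiv.map_eq_zero_iff] at h0
          simpa using congrFun h0 2
        · rw [hq, q1, q2]
          have hrr : (μ1 + l1 * μ2) * d1 * (-((μ1 + l3 * μ2) * d3) / ((μ1 + l1 * μ2) * d1)) =
              -((μ1 + l3 * μ2) * d3) := mul_div_cancel₀ _ (mul_pos hm1 p1).ne'
          simp [Real.sq_sqrt hr]
          linear_combination hrr
      have hz : u 2 ≠ 0 := by
        intro hz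
        have hu' : u = ![u 0, u 1, 0] := by
          ext i; fin_cases i <;> simp [hz]
        have h1 := neg u hu0 hu
        have h2 := hC1.2.1 (u 0) (u 1) (by
          intro h
          simp only [Prod.mk.injEq] at h
          apply hu0
          rw [hu', h.1, h.2]
          ext i; fin_cases i <;> simp)
        rw [← hu'] at h2
        linarith
      have hv : ![u 0 / u 2, u 1 / u 2, 1] = (u 2)⁻¹ • u := by
        ext i; fin_cases i <;> simp [hz] <;> field_simp
      have hv0 : ((u 2)⁻¹ • u) ≠ 0 := by simp [hz, hu0]
      have hvμ : ((u 2)⁻¹ • u) ⬝ᵥ Cμ *ᵥ ((u 2)⁻¹ • u) = 0 := by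
        rw [Matrix.mulVec_smul, smul_dotProduct, dotProduct_smul, hu]; simp
      have h' := h (u 0 / u 2) (u 1 / u 2)
      rw [hv] at h'
      have a := h' hvμ
      have b := rel _ hvμ
      have c := neg _ hv0 hvμ
      by_contra hcon
      have := mul_nonneg_of_nonpos_of_nonpos (not_lt.mp hcon) c.le
      have := mul_neg_of_pos_of_neg hμ2 a
      linarith
    · intro h x y hxy
      have c := neg ![x, y, 1] (by intro h; simpa using congrFun h 2) hxy
      have b := rel _ hxy
      have := mul_neg_of_pos_of_neg h c
      by_contra hcon
      have := mul_nonneg hμ2.le (not_lt.mp hcon)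
      linarith
  · have h13 : 0 < l1 - l3 := by linarith
    have he : e ^ 2 < 1 := by
      have : 0 ≤ (l1 - l2) / (l1 - l3) := div_nonneg (by linarith) h13.le
      simp only [e]
      rw [Real.sq_sqrt this, div_lt_one h13]
      linarith
    have hF := aux_F e he
    have hK : 0 < ellK e := by
      have := hF (show (0:ℝ) < Real.pi / 2 by positivity)
      simpa [ellK, ellF] using this
    have hnd : 0 < l1 * ν2 + ν1 := by nlinarith
    have hmd : 0 < l1 * μ2 + μ1 := by nlinarith
    have m1 : ∀ a b : ℝ, 0 < b → 0 < a + l3 * b → 0 < l1 * b + a →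
        (l1 - l3) * b / (l1 * b + a) ∈ Set.Icc (0:ℝ) 1 := by
      intro a b hb h1 h2
      refine ⟨by positivity, ?_⟩
      rw [div_le_one h2]
      linarith
    have m2 : ∀ t : ℝ, t ∈ Set.Icc (0:ℝ) 1 → √t ∈ Set.Icc (-1:ℝ) 1 := fun t ht =>
      ⟨by linarith [Real.sqrt_nonneg t], Real.sqrt_le_one.mpr ht.2⟩
    have mν := m1 ν1 ν2 hν2 hν hnd
    have mμ := m1 μ1 μ2 hμ2 hμ hmd
    simp only [ρν, ρμ]
    rw [div_lt_div_iff_of_pos_right (by positivity), hF.lt_iff_lt,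
      Real.strictMonoOn_arcsin.lt_iff_lt (m2 _ mν) (m2 _ mμ), Real.sqrt_lt_sqrt_iff mν.1,
      div_lt_div_iff₀ hnd hmd]
    have : (l1 - l3) * μ2 * (l1 * ν2 + ν1) - (l1 - l3) * ν2 * (l1 * μ2 + μ1) =
      (l1 - l3) * (ν1 * μ2 - ν2 * μ1) := by ring
    rw [← sub_pos (b := (l1 - l3) * ν2 * (l1 * μ2 + μ1)), this]
    exact (mul_pos_iff_of_pos_left h13).symm
end

section
/- Let (e,f0) ∈ Δ = {(e,f) : 0 < f < e < 1}, set s = √((1−e²)(1−f0²)), f1 = √(e(e+f0)/(1+e f0+s)) and f2 = √(e(e−f0)/(1−e f0+s)). Then (e,f1) ∈ Δ and (e,f2) ∈ Δ, and the billiard rotation numbers satisfy ρ̂(e,f1) = ρ̂(e,f0)/2 and ρ̂(e,f2) = 1/2 − ρ̂(e,f0)/2. -/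
open Real

lemma hr_pos (e : ℝ) (h0 : 0 < e) (he : e < 1) (τ : ℝ) : 0 < 1 - e ^ 2 * Real.sin τ ^ 2 := by
  have h1 : e ^ 2 < 1 := by nlinarith
  have h2 := Real.sin_sq_le_one τ
  nlinarith [sq_nonneg e, sq_nonneg (Real.sin τ)]

lemma hr_cont (e : ℝ) (h0 : 0 < e) (he : e < 1) :
    Continuous (fun τ : ℝ => 1 / Real.sqrt (1 - e ^ 2 * Real.sin τ ^ 2)) := by
  refine Continuous.div continuous_const (by fun_prop) ?_
  intro τ
  exact (Real.sqrt_pos.2 (hr_pos e h0 he τ)).ne'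

lemma hr_deriv (e : ℝ) (h0 : 0 < e) (he : e < 1) (φ : ℝ) :
    HasDerivAt (fun φ => ellF φ e) (1 / Real.sqrt (1 - e ^ 2 * Real.sin φ ^ 2)) φ := by
  unfold ellF
  have hc := hr_cont e h0 he
  exact intervalIntegral.integral_hasDerivAt_right (hc.intervalIntegrable _ _)
    (hc.stronglyMeasurableAtFilter _ _) hc.continuousAt

lemma hr_zero (e : ℝ) : ellF 0 e = 0 := by simp [ellF]

lemma hr_K (e : ℝ) (h0 : 0 < e) (he : e < 1) : 0 < ellK e := by
  unfold ellK ellF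
  refine intervalIntegral.intervalIntegral_pos_of_pos
    ((hr_cont e h0 he).intervalIntegrable _ _) ?_ (by positivity)
  intro τ
  exact one_div_pos.2 (Real.sqrt_pos.2 (hr_pos e h0 he τ))

lemma hr_G (e : ℝ) (h0 : 0 < e) (he : e < 1) (x : ℝ) :
    HasDerivAt (fun x => ellF (arctan x) e)
      (1 / (√(1 + x ^ 2) * √(1 + (1 - e ^ 2) * x ^ 2))) x := by
  have h := (hr_deriv e h0 he (arctan x)).comp x (Real.hasDerivAt_arctan x)
  refine h.congr_deriv ?_
  have hk : 0 < 1 - e ^ 2 := by nlinarith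
  have hP : 0 < 1 + x ^ 2 := by positivity
  have hQ : 0 < 1 + (1 - e ^ 2) * x ^ 2 := by positivity
  have e1 : 1 - e ^ 2 * sin (arctan x) ^ 2 = (1 + (1 - e ^ 2) * x ^ 2) / (1 + x ^ 2) := by
    rw [Real.sin_arctan, div_pow, Real.sq_sqrt hP.le]
    field_simp
    ring
  rw [e1, Real.sqrt_div hQ.le]
  have := Real.sqrt_pos.2 hP
  have := Real.sqrt_pos.2 hQ
  have e2 := Real.sq_sqrt hP.le
  rw [← e2]
  rw [Real.sqrt_sq (Real.sqrt_nonneg _)]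
  field_simp

lemma hr_compl (e : ℝ) (h0 : 0 < e) (he : e < 1) (x : ℝ) :
    ellF (π / 2 - arctan (√(1 - e ^ 2) * x)) e + ellF (arctan x) e = ellK e := by
  have hk : 0 < 1 - e ^ 2 := by nlinarith
  have key : ∀ x, HasDerivAt
      (fun x => ellF (π / 2 - arctan (√(1 - e ^ 2) * x)) e + ellF (arctan x) e) 0 x := by
    intro x
    have hP : 0 < 1 + x ^ 2 := by positivity
    have hQ : 0 < 1 + (1 - e ^ 2) * x ^ 2 := by positivity
    have ha : HasDerivAt (fun x : ℝ => √(1 - e ^ 2) * x) (√(1 - e ^ 2)) x := by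
      simpa using (hasDerivAt_id x).const_mul (√(1 - e ^ 2))
    have hb := (ha.arctan).const_sub (π / 2)
    have h := (hr_deriv e h0 he (π / 2 - arctan (√(1 - e ^ 2) * x))).comp x hb
    refine (h.add (hr_G e h0 he x)).congr_deriv ?_
    have hs := Real.sq_sqrt hk.le
    have e1 : 1 - e ^ 2 * sin (π / 2 - arctan (√(1 - e ^ 2) * x)) ^ 2
        = ((1 - e ^ 2) * (1 + x ^ 2)) / (1 + (1 - e ^ 2) * x ^ 2) := by
      rw [Real.sin_pi_div_two_sub, Real.cos_arctan, mul_pow, hs, div_pow, Real.sq_sqrt hQ.le]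
      field_simp
      ring
    rw [e1, Real.sqrt_div (by positivity), Real.sqrt_mul hk.le, mul_pow, hs]
    have p1 := Real.sqrt_pos.2 hP
    have p2 := Real.sqrt_pos.2 hQ
    have p3 := Real.sqrt_pos.2 hk
    have e2 := Real.sq_sqrt hQ.le
    generalize √(1 + (1 - e ^ 2) * x ^ 2) = Q at *
    rw [← e2]
    field_simp
    ring
  have hc := is_const_of_deriv_eq_zero (fun x => (key x).differentiableAt)
    (fun x => (key x).deriv) x 0
  simp only [mul_zero, arctan_zero, sub_zero, hr_zero, add_zero] at hc
  exact hc

lemma hr_double (e : ℝ) (h0 : 0 < e) (he : e < 1) (x : ℝ) :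
    ellF (2 * arctan (x * √(1 + (1 - e ^ 2) * x ^ 2) / √(1 + x ^ 2))) e
      = 2 * ellF (arctan x) e := by
  have hk : 0 < 1 - e ^ 2 := by nlinarith
  have key : ∀ x, HasDerivAt
      (fun x => ellF (2 * arctan (x * √(1 + (1 - e ^ 2) * x ^ 2) / √(1 + x ^ 2))) e
        - 2 * ellF (arctan x) e) 0 x := by
    intro x
    have hP : 0 < 1 + x ^ 2 := by positivity
    have hQ : 0 < 1 + (1 - e ^ 2) * x ^ 2 := by positivity
    have p1 := Real.sqrt_pos.2 hP
    have p2 := Real.sqrt_pos.2 hQ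
    have d0 : HasDerivAt (fun x : ℝ => x ^ 2) (2 * x) x := by simpa using hasDerivAt_pow 2 x
    have d1 := (d0.const_add 1).sqrt hP.ne'
    have d2 := ((d0.const_mul (1 - e ^ 2)).const_add 1).sqrt hQ.ne'
    have d3 := (((hasDerivAt_id' x).mul d2).div d1 p1.ne').arctan.const_mul 2
    have h := (hr_deriv e h0 he
      (2 * arctan (x * √(1 + (1 - e ^ 2) * x ^ 2) / √(1 + x ^ 2)))).comp x d3
    refine (h.sub ((hr_G e h0 he x).const_mul 2)).congr_deriv ?_
    have s1 := Real.sq_sqrt hP.le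
    have s2 := Real.sq_sqrt hQ.le
    simp only [Pi.mul_apply, Pi.div_apply]
    generalize √(1 + (1 - e ^ 2) * x ^ 2) = Q at *
    generalize √(1 + x ^ 2) = P at *
    have hN : 0 < 1 + 2 * x ^ 2 + (1 - e ^ 2) * x ^ 4 := by positivity
    have hM : 0 < 1 + 2 * (1 - e ^ 2) * x ^ 2 + (1 - e ^ 2) * x ^ 4 := by positivity
    have t2 : (x * Q / P) ^ 2 = x ^ 2 * (1 + (1 - e ^ 2) * x ^ 2) / (1 + x ^ 2) := by
      rw [div_pow, mul_pow, s1, s2]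
    have t3 : 1 + (x * Q / P) ^ 2 = (1 + 2 * x ^ 2 + (1 - e ^ 2) * x ^ 4) / (1 + x ^ 2) := by
      rw [t2]; field_simp; ring
    have e1 : 1 - e ^ 2 * sin (2 * arctan (x * Q / P)) ^ 2
        = ((1 + 2 * (1 - e ^ 2) * x ^ 2 + (1 - e ^ 2) * x ^ 4) /
          (1 + 2 * x ^ 2 + (1 - e ^ 2) * x ^ 4)) ^ 2 := by
      have : sin (2 * arctan (x * Q / P)) ^ 2
          = 4 * (x * Q / P) ^ 2 / (1 + (x * Q / P) ^ 2) ^ 2 := by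
        rw [Real.sin_two_mul, Real.sin_arctan, Real.cos_arctan]
        have hh : 0 < 1 + (x * Q / P) ^ 2 := by positivity
        have h1 := Real.sq_sqrt hh.le
        have h2 := Real.sqrt_pos.2 hh
        generalize √(1 + (x * Q / P) ^ 2) = R at *
        rw [← h1]
        field_simp
        ring
      rw [this, t3, t2]
      field_simp
      ring
    rw [e1, Real.sqrt_sq (by positivity), t3]
    have hx : (1 - e ^ 2) * x ^ 2 = Q ^ 2 - 1 := by linarith
    have hx2 : x ^ 2 = P ^ 2 - 1 := by linarith
    have hder : ((1 * Q + x * ((1 - e ^ 2) * (2 * x) / (2 * Q))) * P -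
          x * Q * (2 * x / (2 * P))) / P ^ 2
        = (1 + 2 * (1 - e ^ 2) * x ^ 2 + (1 - e ^ 2) * x ^ 4) / (P ^ 3 * Q) := by
      field_simp
      grind
    rw [hder, ← s1]
    field_simp
    ring
  have hc := is_const_of_deriv_eq_zero (fun x => (key x).differentiableAt)
    (fun x => (key x).deriv) x 0
  simp only [zero_mul, zero_div, mul_zero, arctan_zero, sub_zero, hr_zero] at hc
  linarith

lemma hr_omega (e f : ℝ) (hf : 0 < f) (hfe : f < e) (he : e < 1) :
    omegaHat e f = arctan (√((e ^ 2 - f ^ 2) / (f ^ 2 * (1 - e ^ 2)))) := by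
  have h0 : 0 < e := hf.trans hfe
  have hk : 0 < 1 - e ^ 2 := by nlinarith
  have hl : 0 < 1 - f ^ 2 := by nlinarith
  have hm : 0 < e ^ 2 - f ^ 2 := by nlinarith
  have hX : 0 < (e ^ 2 - f ^ 2) / (f ^ 2 * (1 - e ^ 2)) := by positivity
  rw [Real.arctan_eq_arcsin, Real.sq_sqrt hX.le, ← Real.sqrt_div hX.le, omegaHat]
  congr 2
  have : 1 + (e ^ 2 - f ^ 2) / (f ^ 2 * (1 - e ^ 2)) = e ^ 2 * (1 - f ^ 2) / (f ^ 2 * (1 - e ^ 2)) := by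
    field_simp; ring
  rw [this]
  field_simp

set_option maxHeartbeats 1000000 in
/-- Half-rotation: the transformations `f0 ↦ f1` and `f0 ↦ f2`
stay in `Δ` and halve, respectively complement-halve, the billiard rotation
number. -/
theorem half_rotation (e f0 : ℝ) (hf : 0 < f0) (hfe : f0 < e) (he : e < 1) :
    let s := Real.sqrt ((1 - e ^ 2) * (1 - f0 ^ 2))
    let f1 := Real.sqrt (e * (e + f0) / (1 + e * f0 + s))
    let f2 := Real.sqrt (e * (e - f0) / (1 - e * f0 + s))
    (0 < f1 ∧ f1 < e) ∧ (0 < f2 ∧ f2 < e) ∧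
    rhoHat e f1 = rhoHat e f0 / 2 ∧
    rhoHat e f2 = 1 / 2 - rhoHat e f0 / 2 := by
  intro s f1 f2
  have h0 : 0 < e := hf.trans hfe
  have hk : 0 < 1 - e ^ 2 := by nlinarith
  have hl : 0 < 1 - f0 ^ 2 := by nlinarith
  have hm : 0 < e ^ 2 - f0 ^ 2 := by nlinarith
  obtain ⟨a, ha, ha2, has⟩ : ∃ a, 0 < a ∧ a ^ 2 = 1 - e ^ 2 ∧ √(1 - e ^ 2) = a :=
    ⟨_, Real.sqrt_pos.2 hk, Real.sq_sqrt hk.le, rfl⟩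
  obtain ⟨b, hb, hb2, hbs⟩ : ∃ b, 0 < b ∧ b ^ 2 = 1 - f0 ^ 2 ∧ √(1 - f0 ^ 2) = b :=
    ⟨_, Real.sqrt_pos.2 hl, Real.sq_sqrt hl.le, rfl⟩
  have hs : s = a * b := by
    simp only [s]; rw [Real.sqrt_mul hk.le, has, hbs]
  have hef : e * f0 < 1 := by nlinarith
  have hd1 : 0 < 1 + e * f0 + a * b := by positivity
  have hd2 : 0 < 1 - e * f0 + a * b := by nlinarith [mul_pos ha hb]
  have hpq : f0 * a < e * b := by
    apply lt_of_pow_lt_pow_left₀ 2 (by positivity)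
    rw [mul_pow, mul_pow, ha2, hb2]; nlinarith
  have hA1 : 0 < e * (e + f0) / (1 + e * f0 + a * b) := by positivity
  have hA2 : 0 < e * (e - f0) / (1 - e * f0 + a * b) :=
    div_pos (mul_pos h0 (by linarith)) hd2
  have hf1 : f1 = √(e * (e + f0) / (1 + e * f0 + a * b)) := by simp only [f1, hs]
  have hf2 : f2 = √(e * (e - f0) / (1 - e * f0 + a * b)) := by simp only [f2, hs]
  have f1p : 0 < f1 := by rw [hf1]; exact Real.sqrt_pos.2 hA1
  have f2p : 0 < f2 := by rw [hf2]; exact Real.sqrt_pos.2 hA2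
  have f1s : f1 ^ 2 = e * (e + f0) / (1 + e * f0 + a * b) := by rw [hf1, Real.sq_sqrt hA1.le]
  have f2s : f2 ^ 2 = e * (e - f0) / (1 - e * f0 + a * b) := by rw [hf2, Real.sq_sqrt hA2.le]
  have f1e : f1 < e := by
    apply lt_of_pow_lt_pow_left₀ 2 h0.le
    rw [f1s, div_lt_iff₀ hd1]
    have := mul_pos (mul_pos h0 ha) (sub_pos.2 hpq)
    nlinarith
  have f2e : f2 < e := by
    apply lt_of_pow_lt_pow_left₀ 2 h0.le
    rw [f2s, div_lt_iff₀ hd2]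
    have h1 := mul_pos h0 (mul_pos hf hk)
    have h2 := mul_pos (mul_pos h0 h0) (mul_pos ha hb)
    nlinarith
  clear_value f1 f2 s
  have g1 : e ^ 2 - f1 ^ 2 = e * a * (e * b - f0 * a) / (1 + e * f0 + a * b) := by
    rw [f1s, eq_div_iff hd1.ne', sub_mul, div_mul_cancel₀ _ hd1.ne']
    linear_combination (e * f0) * ha2
  have g2 : e ^ 2 - f2 ^ 2 = e * a * (e * b + f0 * a) / (1 - e * f0 + a * b) := by
    rw [f2s, eq_div_iff hd2.ne', sub_mul, div_mul_cancel₀ _ hd2.ne']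
    linear_combination (-e * f0) * ha2
  have g3 : 1 - f1 ^ 2 = a * (a + b) / (1 + e * f0 + a * b) := by
    rw [f1s, eq_div_iff hd1.ne', sub_mul, div_mul_cancel₀ _ hd1.ne']
    linear_combination -ha2
  have hm1 : 0 < e ^ 2 - f1 ^ 2 := sub_pos.2 (pow_lt_pow_left₀ f1e f1p.le two_ne_zero)
  have hm2 : 0 < e ^ 2 - f2 ^ 2 := sub_pos.2 (pow_lt_pow_left₀ f2e f2p.le two_ne_zero)
  have hl1 : 0 < 1 - f1 ^ 2 := by linarith
  have hX1 : 0 < (e ^ 2 - f1 ^ 2) / (f1 ^ 2 * (1 - e ^ 2)) := by positivity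
  have hX2 : 0 < (e ^ 2 - f2 ^ 2) / (f2 ^ 2 * (1 - e ^ 2)) := by positivity
  have hX0 : 0 < (e ^ 2 - f0 ^ 2) / (f0 ^ 2 * (1 - e ^ 2)) := by positivity
  have w0 := hr_omega e f0 hf hfe he
  have w1 := hr_omega e f1 f1p f1e he
  have w2 := hr_omega e f2 f2p f2e he
  have x1p := Real.sqrt_pos.2 hX1
  have x1s := Real.sq_sqrt hX1.le
  have x0p := Real.sqrt_pos.2 hX0
  have x0s := Real.sq_sqrt hX0.le
  have x2p := Real.sqrt_pos.2 hX2
  have x2s := Real.sq_sqrt hX2.le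
  generalize √((e ^ 2 - f1 ^ 2) / (f1 ^ 2 * (1 - e ^ 2))) = x1 at *
  generalize √((e ^ 2 - f0 ^ 2) / (f0 ^ 2 * (1 - e ^ 2))) = x0 at *
  generalize √((e ^ 2 - f2 ^ 2) / (f2 ^ 2 * (1 - e ^ 2))) = x2 at *
  have hpq' : 0 < e * b + f0 * a := by positivity
  have D := hr_double e h0 he x1
  have hP : 0 < 1 + x1 ^ 2 := by positivity
  have hQ : 0 < 1 + (1 - e ^ 2) * x1 ^ 2 := by positivity
  have tp : 0 < x1 * √(1 + (1 - e ^ 2) * x1 ^ 2) / √(1 + x1 ^ 2) := by positivity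
  have ts : (x1 * √(1 + (1 - e ^ 2) * x1 ^ 2) / √(1 + x1 ^ 2)) ^ 2
      = (e * b - f0 * a) / (e * b + f0 * a) := by
    rw [div_pow, mul_pow, Real.sq_sqrt hP.le, Real.sq_sqrt hQ.le, x1s]
    have : (e ^ 2 - f1 ^ 2) / (f1 ^ 2 * (1 - e ^ 2)) *
        (1 + (1 - e ^ 2) * ((e ^ 2 - f1 ^ 2) / (f1 ^ 2 * (1 - e ^ 2)))) /
        (1 + (e ^ 2 - f1 ^ 2) / (f1 ^ 2 * (1 - e ^ 2)))
        = (e ^ 2 - f1 ^ 2) / (f1 ^ 2 * (1 - f1 ^ 2)) := by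
      have h1 : 1 + (e ^ 2 - f1 ^ 2) / (f1 ^ 2 * (1 - e ^ 2))
          = e ^ 2 * (1 - f1 ^ 2) / (f1 ^ 2 * (1 - e ^ 2)) := by field_simp; ring
      rw [h1]
      field_simp
      ring
    rw [this, div_eq_div_iff (by positivity) hpq'.ne', g1, g3, f1s]
    have g4 : (1 + e * f0 + a * b) * (e * b + f0 * a) = (e + f0) * (a + b) := by
      linear_combination (a * e) * hb2 + (f0 * b) * ha2
    field_simp
    linear_combination (e * b - f0 * a) * g4
  generalize x1 * √(1 + (1 - e ^ 2) * x1 ^ 2) / √(1 + x1 ^ 2) = t at *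
  have t1 : t < 1 := by
    apply lt_of_pow_lt_pow_left₀ 2 (by norm_num)
    rw [ts, one_pow, div_lt_iff₀ hpq']
    have := mul_pos hf ha
    linarith
  have hw : omegaHat e f0 = 2 * arctan t := by
    rw [w0, Real.two_mul_arctan (by linarith) t1]
    congr 1
    have h1t : 0 < 1 - t ^ 2 := sub_pos.2 (pow_lt_one₀ tp.le t1 two_ne_zero)
    rw [← sq_eq_sq₀ x0p.le (by positivity), x0s, div_pow, mul_pow, ts]
    have : 1 - (e * b - f0 * a) / (e * b + f0 * a) = 2 * (f0 * a) / (e * b + f0 * a) := by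
      field_simp; ring
    rw [this, ← ha2]
    field_simp
    linear_combination (-e ^ 2) * hb2 + f0 ^ 2 * ha2
  have hF1 : ellF (omegaHat e f0) e = 2 * ellF (omegaHat e f1) e := by rw [hw, D, w1]
  have hx2 : x2 = (a * x1)⁻¹ := by
    rw [← sq_eq_sq₀ x2p.le (by positivity), inv_pow, mul_pow, x1s, x2s, ha2,
      ← mul_eq_one_iff_eq_inv₀ (by positivity)]
    have : (e ^ 2 - f2 ^ 2) * (e ^ 2 - f1 ^ 2) = f1 ^ 2 * f2 ^ 2 * (1 - e ^ 2) := by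
      rw [g1, g2, f1s, f2s, ← ha2]
      field_simp
      linear_combination e ^ 2 * hb2 - f0 ^ 2 * ha2
    field_simp
    linear_combination this
  have hF2 : ellF (omegaHat e f2) e = ellK e - ellF (omegaHat e f1) e := by
    have := hr_compl e h0 he x1
    rw [has] at this
    rw [w2, hx2, Real.arctan_inv_of_pos (by positivity), w1]
    linarith
  have hK := hr_K e h0 he
  refine ⟨⟨f1p, f1e⟩, ⟨f2p, f2e⟩, ?_, ?_⟩
  · unfold rhoHat
    rw [hF1]; field_simp
  · unfold rhoHat
    rw [hF1, hF2]; field_simp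
end

section
/- Let λ1 > λ2 > λ3 > 0, e = √((λ1−λ2)/(λ1−λ3)), and let ρ = F(arcsin √((λ1−λ3)/λ1), e)/(2K(e)) be the rotation number of the Poncelet map associated with the parameter ν_i = (0,1). Then: (1) ρ = 1/4 if and only if λ1λ2 − λ1λ3 − λ2λ3 = 0; (2) ρ = 1/3 if and only if 1/√λ3 = 1/√λ1 + 1/√λ2; (3) ρ = 1/6 if and only if √(1−λ3/λ1) + √(1−λ3/λ2) = 1. -/
open Real

lemma aux_pos {k : ℝ} (hk : k ^ 2 < 1) (τ : ℝ) : 0 < 1 - k ^ 2 * Real.sin τ ^ 2 := by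
  nlinarith [Real.sin_sq_add_cos_sq τ, sq_nonneg (Real.cos τ), sq_nonneg k, sq_nonneg (Real.sin τ)]

lemma aux_deriv {k : ℝ} (hk : k ^ 2 < 1) (φ : ℝ) :
    HasDerivAt (fun x => ellF x k) (1 / Real.sqrt (1 - k ^ 2 * Real.sin φ ^ 2)) φ := by
  have hc : Continuous (fun τ : ℝ => 1 / Real.sqrt (1 - k ^ 2 * Real.sin τ ^ 2)) := by
    refine Continuous.div continuous_const (by fun_prop) ?_
    intro x
    exact (Real.sqrt_pos.2 (aux_pos hk x)).ne'
  exact hc.integral_hasStrictDerivAt 0 φ |>.hasDerivAt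

lemma aux_zero (k : ℝ) : ellF 0 k = 0 := by simp [ellF]

lemma aux_mono {k : ℝ} (hk : k ^ 2 < 1) : StrictMono (fun x => ellF x k) := by
  apply strictMono_of_deriv_pos
  intro x
  rw [(aux_deriv hk x).deriv]
  exact one_div_pos.2 (Real.sqrt_pos.2 (aux_pos hk x))

lemma aux_refl {k : ℝ} (hk : k ^ 2 < 1) (φ : ℝ) :
    ellF (Real.pi - φ) k = 2 * ellK k - ellF φ k := by
  have hd : ∀ x, HasDerivAt (fun x => ellF (Real.pi - x) k + ellF x k) 0 x := by
    intro x
    have h1 := (aux_deriv hk (Real.pi - x)).comp x ((hasDerivAt_id x).const_sub Real.pi)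
    have h2 := h1.add (aux_deriv hk x)
    refine h2.congr_deriv ?_
    rw [Real.sin_pi_sub]; ring
  have := is_const_of_deriv_eq_zero (fun x => (hd x).differentiableAt) (fun x => (hd x).deriv)
    φ (Real.pi / 2)
  have e : Real.pi - Real.pi / 2 = Real.pi / 2 := by ring
  simp only [e] at this
  unfold ellK
  linarith

lemma aux_const {f : ℝ → ℝ} (hd : ∀ x ∈ Set.Ioo (-(Real.pi / 2)) (Real.pi / 2), HasDerivAt f 0 x)
    {φ : ℝ} (hφ : φ ∈ Set.Ioo (-(Real.pi / 2)) (Real.pi / 2)) : f φ = f 0 := by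
  refine isOpen_Ioo.is_const_of_deriv_eq_zero isPreconnected_Ioo
    (fun x hx => (hd x hx).differentiableAt.differentiableWithinAt)
    (fun x hx => (hd x hx).deriv) hφ ⟨?_, ?_⟩ <;> linarith [Real.pi_pos]

lemma aux_compl {k q : ℝ} (hk : k ^ 2 < 1) (hq : 0 < q) (hkq : q ^ 2 = 1 - k ^ 2) {φ : ℝ}
    (hφ : φ ∈ Set.Ioo (-(Real.pi / 2)) (Real.pi / 2)) :
    ellF (Real.pi / 2 - Real.arctan (q * Real.tan φ)) k = ellK k - ellF φ k := by
  have hd : ∀ x ∈ Set.Ioo (-(Real.pi / 2)) (Real.pi / 2),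
      HasDerivAt (fun x => ellF (Real.pi / 2 - Real.arctan (q * Real.tan x)) k + ellF x k) 0 x := by
    intro x hx
    have hc : 0 < Real.cos x := Real.cos_pos_of_mem_Ioo hx
    have h0 := (((Real.hasDerivAt_tan hc.ne').const_mul q).arctan).const_sub (Real.pi / 2)
    have h1 := (aux_deriv hk (Real.pi / 2 - Real.arctan (q * Real.tan x))).comp x h0
    refine (h1.add (aux_deriv hk x)).congr_deriv ?_
    rw [Real.sin_pi_div_two_sub, Real.cos_sq_arctan, Real.tan_eq_sin_div_cos]
    have hp := aux_pos hk x
    set d := Real.sqrt (1 - k ^ 2 * Real.sin x ^ 2) with hdd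
    have hdpos : 0 < d := Real.sqrt_pos.2 hp
    have hd2 : d ^ 2 = 1 - k ^ 2 * Real.sin x ^ 2 := Real.sq_sqrt hp.le
    have hsc := Real.sin_sq_add_cos_sq x
    have e1 : 1 + (q * (Real.sin x / Real.cos x)) ^ 2 = (d / Real.cos x) ^ 2 := by
      field_simp
      rw [hd2, hkq]; linarith
    have e2 : 1 - k ^ 2 * (1 / (1 + (q * (Real.sin x / Real.cos x)) ^ 2)) = (q / d) ^ 2 := by
      rw [e1]
      field_simp
      rw [hd2, hkq, Real.cos_sq']; ring
    rw [e2, e1, Real.sqrt_sq (by positivity)]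
    field_simp
    ring
  have := aux_const hd hφ
  simp only [Real.tan_zero, mul_zero, Real.arctan_zero, sub_zero, aux_zero] at this
  unfold ellK
  linarith

set_option maxHeartbeats 1000000 in
lemma aux_dup {k : ℝ} (hk : k ^ 2 < 1) {φ : ℝ}
    (hφ : φ ∈ Set.Ioo (-(Real.pi / 2)) (Real.pi / 2)) :
    ellF (2 * Real.arctan (Real.tan φ * Real.sqrt (1 - k ^ 2 * Real.sin φ ^ 2))) k
      = 2 * ellF φ k := by
  have hd : ∀ x ∈ Set.Ioo (-(Real.pi / 2)) (Real.pi / 2),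
      HasDerivAt (fun x => ellF (2 * Real.arctan
        (Real.tan x * Real.sqrt (1 - k ^ 2 * Real.sin x ^ 2))) k - 2 * ellF x k) 0 x := by
    intro x hx
    have hc : 0 < Real.cos x := Real.cos_pos_of_mem_Ioo hx
    have hp := aux_pos hk x
    have hs0 : HasDerivAt (fun y : ℝ => 1 - k ^ 2 * Real.sin y ^ 2)
        (-(k ^ 2 * (2 * Real.sin x * Real.cos x))) x := by
      have := (((Real.hasDerivAt_sin x).fun_pow 2).const_mul (k ^ 2)).const_sub 1
      refine this.congr_deriv ?_
      norm_num
    have hs := hs0.sqrt hp.ne'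
    have h00 := (Real.hasDerivAt_tan hc.ne').fun_mul hs
    have h0 := h00.arctan.const_mul 2
    have h1 := (aux_deriv hk (2 * Real.arctan
        (Real.tan x * Real.sqrt (1 - k ^ 2 * Real.sin x ^ 2)))).comp x h0
    refine (h1.sub ((aux_deriv hk x).const_mul 2)).congr_deriv ?_
    set d := Real.sqrt (1 - k ^ 2 * Real.sin x ^ 2) with hdd
    have hdpos : 0 < d := Real.sqrt_pos.2 hp
    have hd2 : d ^ 2 = 1 - k ^ 2 * Real.sin x ^ 2 := Real.sq_sqrt hp.le
    have hsc := Real.sin_sq_add_cos_sq x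
    rw [Real.sin_two_mul, Real.tan_eq_sin_div_cos]
    set s := Real.sin x
    set c := Real.cos x
    have hX : 0 < c ^ 2 + s ^ 2 * d ^ 2 := by positivity
    have e1 : 1 + (s / c * d) ^ 2 = (c ^ 2 + s ^ 2 * d ^ 2) / c ^ 2 := by
      field_simp
    have e0 : (2 * Real.sin (Real.arctan (s / c * d)) * Real.cos (Real.arctan (s / c * d))) ^ 2
        = (2 * s * c * d / (c ^ 2 + s ^ 2 * d ^ 2)) ^ 2 := by
      rw [mul_pow, mul_pow, Real.cos_sq_arctan, Real.sin_sq, Real.cos_sq_arctan, e1]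
      field_simp
      ring
    have hc2 : c ^ 2 = 1 - s ^ 2 := by linarith
    have hN : 0 < d ^ 2 - k ^ 2 * s ^ 2 * c ^ 2 := by
      rw [hd2, hc2]
      have : 0 < (1 - k ^ 2 * s ^ 2) ^ 2 := by positivity
      nlinarith [mul_nonneg (mul_nonneg (sq_nonneg k) (sq_nonneg (s ^ 2))) (sub_nonneg.2 hk.le)]
    have e2 : 1 - k ^ 2 * (2 * Real.sin (Real.arctan (s / c * d))
        * Real.cos (Real.arctan (s / c * d))) ^ 2
        = ((d ^ 2 - k ^ 2 * s ^ 2 * c ^ 2) / (c ^ 2 + s ^ 2 * d ^ 2)) ^ 2 := by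
      rw [e0, div_pow, div_pow, ← mul_div_assoc, eq_div_iff (by positivity), sub_mul,
        div_mul_cancel₀ _ (by positivity)]
      simp only [mul_pow, hd2, hc2]; ring
    rw [e2, e1, Real.sqrt_sq (by positivity)]
    have hN' := hN.ne'
    have e3 : 1 / c ^ 2 * d + s / c * (-(k ^ 2 * (2 * s * c)) / (2 * d))
        = (d ^ 2 - k ^ 2 * s ^ 2 * c ^ 2) / (c ^ 2 * d) := by
      field_simp
      ring
    rw [e3]
    field_simp
    ring
  have := aux_const hd hφ
  simp only [Real.tan_zero, zero_mul, Real.arctan_zero, mul_zero, sub_zero, aux_zero] at this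
  linarith

lemma aux_cos_two_arctan (x : ℝ) :
    Real.cos (2 * Real.arctan x) = (1 - x ^ 2) / (1 + x ^ 2) := by
  rw [Real.cos_two_mul, Real.cos_sq_arctan]
  have : 0 < 1 + x ^ 2 := by positivity
  field_simp
  ring

set_option maxHeartbeats 2000000 in
/-- eigenvalue conditions for the Poncelet map of the pencil element
`ν_i = (0,1)` to have rotation number `1/4`, `1/3`, and `1/6`. -/
theorem eigenvalue_porism_conditions (l1 l2 l3 : ℝ)
    (h12 : l2 < l1) (h23 : l3 < l2) (h3 : 0 < l3) :
    let e := Real.sqrt ((l1 - l2) / (l1 - l3))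
    let ρ := ellF (Real.arcsin (Real.sqrt ((l1 - l3) / l1))) e / (2 * ellK e)
    (ρ = 1 / 4 ↔ l1 * l2 - l1 * l3 - l2 * l3 = 0) ∧
    (ρ = 1 / 3 ↔ 1 / Real.sqrt l3 = 1 / Real.sqrt l1 + 1 / Real.sqrt l2) ∧
    (ρ = 1 / 6 ↔ Real.sqrt (1 - l3 / l1) + Real.sqrt (1 - l3 / l2) = 1) := by
  intro e ρ
  have h13 : 0 < l1 - l3 := by linarith
  have h1 : 0 < l1 := by linarith
  have h2 : 0 < l2 := by linarith
  have hl12 : 0 < l1 - l2 := by linarith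
  have hl23 : 0 < l2 - l3 := by linarith
  have he2 : e ^ 2 = (l1 - l2) / (l1 - l3) := Real.sq_sqrt (by positivity)
  have hk : e ^ 2 < 1 := by rw [he2, div_lt_one h13]; linarith
  obtain ⟨q, hqdef⟩ : ∃ q, q = Real.sqrt ((l2 - l3) / (l1 - l3)) := ⟨_, rfl⟩
  have hq : 0 < q := by rw [hqdef]; exact Real.sqrt_pos.2 (by positivity)
  have hq2 : q ^ 2 = (l2 - l3) / (l1 - l3) := by rw [hqdef]; exact Real.sq_sqrt (by positivity)
  have hkq : q ^ 2 = 1 - e ^ 2 := by rw [hq2, he2]; field_simp; ring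
  set w := Real.arcsin (Real.sqrt ((l1 - l3) / l1)) with hw
  obtain ⟨s, hsdef⟩ : ∃ s, s = Real.sqrt ((l1 - l3) / l1) := ⟨_, rfl⟩
  have hs : 0 < s := by rw [hsdef]; exact Real.sqrt_pos.2 (by positivity)
  have hs2 : s ^ 2 = (l1 - l3) / l1 := by rw [hsdef]; exact Real.sq_sqrt (by positivity)
  have hs1 : s < 1 := by
    have : s ^ 2 < 1 := by rw [hs2, div_lt_one h1]; linarith
    nlinarith
  rw [← hsdef] at hw
  have hsin : Real.sin w = s := by rw [hw]; exact Real.sin_arcsin (by linarith) hs1.le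
  have hw0 : 0 < w := by rw [hw]; exact Real.arcsin_pos.2 hs
  have hw1 : w < Real.pi / 2 := by rw [hw]; exact Real.arcsin_lt_pi_div_two.2 hs1
  have hwm : w ∈ Set.Ioo (-(Real.pi / 2)) (Real.pi / 2) := ⟨by linarith, hw1⟩
  obtain ⟨c, hcdef⟩ : ∃ c, c = Real.cos w := ⟨_, rfl⟩
  have hc : 0 < c := by rw [hcdef]; exact Real.cos_pos_of_mem_Ioo hwm
  have hsc : s ^ 2 + c ^ 2 = 1 := by rw [← hsin, hcdef]; exact Real.sin_sq_add_cos_sq w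
  have hc2 : c ^ 2 = l3 / l1 := by
    have : c ^ 2 = 1 - s ^ 2 := by linarith
    rw [this, hs2]; field_simp; ring
  have hce : c = Real.sqrt l3 / Real.sqrt l1 := by
    rw [← Real.sqrt_div h3.le, ← hc2, Real.sqrt_sq hc.le]
  obtain ⟨d, hddef⟩ : ∃ d, d = Real.sqrt (1 - e ^ 2 * Real.sin w ^ 2) := ⟨_, rfl⟩
  have hd2' : 1 - e ^ 2 * Real.sin w ^ 2 = l2 / l1 := by
    rw [hsin, hs2, he2]; field_simp; ring
  rw [hd2'] at hddef
  have hd : 0 < d := by rw [hddef]; exact Real.sqrt_pos.2 (by positivity)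
  have hd2 : d ^ 2 = l2 / l1 := by rw [hddef]; exact Real.sq_sqrt (by positivity)
  have hde : d = Real.sqrt l2 / Real.sqrt l1 := by rw [hddef, Real.sqrt_div h2.le]
  have hdup := aux_dup hk hwm
  rw [hd2', ← hddef] at hdup
  have hcompl := aux_compl hk hq hkq hwm
  have hrefl := aux_refl hk w
  have ht : Real.tan w = s / c := by rw [Real.tan_eq_sin_div_cos, hsin, hcdef]
  have hwt : w = Real.arctan (s / c) := by
    rw [← ht, Real.arctan_tan hwm.1 hwm.2]
  rw [ht] at hdup hcompl
  have hK : 0 < ellK e := by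
    have := aux_mono hk (show (0:ℝ) < Real.pi / 2 by positivity)
    simp only [aux_zero] at this
    exact this
  have hinj : ∀ a b, ellF a e = ellF b e ↔ a = b := fun a b => (aux_mono hk).injective.eq_iff
  have htd : 0 < s / c * d := by positivity
  have hA0 : 0 < Real.arctan (s / c * d) := Real.arctan_pos.2 htd
  have hA1 := Real.arctan_lt_pi_div_two (s / c * d)
  have hcosA : Real.cos (2 * Real.arctan (s / c * d))
      = (c ^ 2 - s ^ 2 * d ^ 2) / (c ^ 2 + s ^ 2 * d ^ 2) := by
    rw [aux_cos_two_arctan]; field_simp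
  refine ⟨?_, ?_, ?_⟩
  · have r1 : ρ = 1 / 4 ↔ ellF w e = ellF (Real.pi / 2 - Real.arctan (q * (s / c))) e := by
      rw [hcompl]
      show ellF w e / (2 * ellK e) = 1 / 4 ↔ _
      rw [div_eq_iff (by positivity)]
      constructor <;> intro h <;> linarith
    have r2 : w = Real.pi / 2 - Real.arctan (q * (s / c)) ↔ q * (s / c) = (s / c)⁻¹ := by
      rw [← Real.arctan_injective.eq_iff (b := (s / c)⁻¹), Real.arctan_inv_of_pos (by positivity), ← hwt]
      constructor <;> intro h <;> linarith
    rw [r1, hinj, r2]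
    have r3 : q * (s / c) = (s / c)⁻¹ ↔ q * s ^ 2 = c ^ 2 := by
      rw [inv_div, ← mul_div_assoc, div_eq_div_iff hc.ne' hs.ne']
      constructor <;> intro h <;> linarith
    have r4 : q * s ^ 2 = c ^ 2 ↔ q ^ 2 * (s ^ 2) ^ 2 = (c ^ 2) ^ 2 := by
      rw [← mul_pow]
      exact (pow_left_inj₀ (by positivity) (by positivity) (by norm_num)).symm
    rw [r3, r4, hq2, hs2, hc2]
    have r5 : (l2 - l3) / (l1 - l3) * ((l1 - l3) / l1) ^ 2 = (l2 - l3) * (l1 - l3) / l1 ^ 2 := by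
      field_simp
    rw [r5, div_pow, div_left_inj' (by positivity)]
    constructor <;> intro h <;> linarith
  · have r1 : ρ = 1 / 3 ↔ ellF (2 * Real.arctan (s / c * d)) e = ellF (Real.pi - w) e := by
      rw [hdup, hrefl]
      show ellF w e / (2 * ellK e) = 1 / 3 ↔ _
      rw [div_eq_iff (by positivity)]
      constructor <;> intro h <;> linarith
    have r2 : 2 * Real.arctan (s / c * d) = Real.pi - w ↔
        (c ^ 2 - s ^ 2 * d ^ 2) / (c ^ 2 + s ^ 2 * d ^ 2) = - c := by
      rw [← hcosA, hcdef, ← Real.cos_pi_sub, ← hcdef]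
      exact (Real.injOn_cos.eq_iff ⟨by linarith, by linarith⟩ ⟨by linarith, by linarith⟩).symm
    rw [r1, hinj, r2, div_eq_iff (by positivity)]
    have hc1 : c < 1 := by nlinarith
    have r3 : c ^ 2 - s ^ 2 * d ^ 2 = -c * (c ^ 2 + s ^ 2 * d ^ 2) ↔ c = d * (1 - c) := by
      have hs2' : s ^ 2 = (1 - c) * (1 + c) := by linarith
      have : 0 < d * (1 - c) := mul_pos hd (by linarith)
      rw [← pow_left_inj₀ hc.le this.le (two_ne_zero), hs2']
      constructor
      · intro h
        have : (1 + c) * (c ^ 2 - (d * (1 - c)) ^ 2) = 0 := by linarith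
        rcases mul_eq_zero.1 this with h | h <;> linarith
      · intro h
        have : (1 + c) * (c ^ 2 - (d * (1 - c)) ^ 2) = 0 := by rw [h]; ring
        linarith
    rw [r3, hce, hde]
    have p1 := Real.sqrt_pos.2 h1
    have p2 := Real.sqrt_pos.2 h2
    have p3 := Real.sqrt_pos.2 h3
    generalize Real.sqrt l1 = a at *
    generalize Real.sqrt l2 = b at *
    generalize Real.sqrt l3 = g at *
    have x1 : g / a = b / a * (1 - g / a) ↔ g * a = b * (a - g) := by
      field_simp
    have x2 : 1 / g = 1 / a + 1 / b ↔ a * b = g * (a + b) := by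
      field_simp
      constructor <;> intro h <;> linarith
    rw [x1, x2]
    constructor <;> intro h <;> linarith
  · have r1 : ρ = 1 / 6 ↔ ellF (2 * Real.arctan (s / c * d)) e
        = ellF (Real.pi / 2 - Real.arctan (q * (s / c))) e := by
      rw [hdup, hcompl]
      show ellF w e / (2 * ellK e) = 1 / 6 ↔ _
      rw [div_eq_iff (by positivity)]
      constructor <;> intro h <;> linarith
    have hB0 : 0 < Real.arctan (q * (s / c)) := Real.arctan_pos.2 (by positivity)
    have hB1 := Real.arctan_lt_pi_div_two (q * (s / c))
    have r2 : 2 * Real.arctan (s / c * d) = Real.pi / 2 - Real.arctan (q * (s / c)) ↔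
        (c ^ 2 - s ^ 2 * d ^ 2) / (c ^ 2 + s ^ 2 * d ^ 2)
          = Real.sin (Real.arctan (q * (s / c))) := by
      rw [← hcosA, ← Real.cos_pi_div_two_sub]
      exact (Real.injOn_cos.eq_iff ⟨by linarith, by linarith⟩ ⟨by linarith, by linarith⟩).symm
    obtain ⟨y, hy⟩ : ∃ y, y = Real.sin (Real.arctan (q * (s / c))) := ⟨_, rfl⟩
    have hy0 : 0 < y := by
      rw [hy]; exact Real.sin_pos_of_pos_of_lt_pi hB0 (by linarith)
    have hy2 : y ^ 2 = 1 - l3 / l2 := by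
      rw [hy, Real.sin_sq, Real.cos_sq_arctan, mul_pow, div_pow, hq2, hs2, hc2]
      have : 1 + (l2 - l3) / (l1 - l3) * ((l1 - l3) / l1 / (l3 / l1)) = l2 / l3 := by
        field_simp; ring
      rw [this]; field_simp
    have hy1 : y < 1 := by
      have : 0 < l3 / l2 := by positivity
      nlinarith
    have e1 : Real.sqrt (1 - l3 / l2) = y := by rw [← hy2, Real.sqrt_sq hy0.le]
    have e2 : Real.sqrt (1 - l3 / l1) = s := by
      rw [← hc2, ← hsc, add_sub_cancel_right, Real.sqrt_sq hs.le]
    have hcd : c ^ 2 = d ^ 2 * (1 - y ^ 2) := by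
      rw [hc2, hd2, hy2]; field_simp; ring
    rw [r1, hinj, r2, e1, e2, ← hy, div_eq_iff (by positivity), hcd]
    have hdd : 0 < d ^ 2 := by positivity
    constructor
    · intro h
      have : d ^ 2 * (1 + y) * ((1 - y) ^ 2 - s ^ 2) = 0 := by linarith
      have h' : (1 - y) ^ 2 - s ^ 2 = 0 := by
        rcases mul_eq_zero.1 this with h | h
        · exact absurd h (by positivity)
        · exact h
      have : (1 - y + s) * (1 - y - s) = 0 := by linarith
      rcases mul_eq_zero.1 this with h | h <;> linarith
    · intro h
      have : s = 1 - y := by linarith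
      rw [this]; ring
end

section
/- For 0 < f < e < 1 and any (X,Y) ∈ ℝ² with X² + Y² = 1: the denominator A2² − A1²e²Y² of the standard Poncelet map is nonzero; the image (X',Y') = P_e^f(X,Y) satisfies X'² + Y'² = 1 and (X',Y') ≠ (X,Y); and the line through (X,Y) and (X',Y') is tangent to the ellipse S_e^f = {(x,y) : ((1−f²)/(1−e²))x² + y² = f²/e²}, i.e. there is exactly one t ∈ ℝ such that (1−t)(X,Y) + t(X',Y') ∈ S_e^f. -/
open Real

/-- The Poncelet relation between a point and its image gives tangency. -/
lemma tangency_aux (e f X Y U V : ℝ)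
    (hf : 0 < f) (hfe : f < e) (he : e < 1) (hXY : X ^ 2 + Y ^ 2 = 1)
    (hUV : U ^ 2 + V ^ 2 = 1)
    (hrel : (e ^ 2 - f ^ 4) * (X * U) + (e ^ 2 * (1 - 2 * f ^ 2) + f ^ 4) * (Y * V)
      = -(e ^ 2 + f ^ 4 - 2 * f ^ 2)) :
    ¬ (U = X ∧ V = Y) ∧
    (∃! t : ℝ, ((1 - f ^ 2) / (1 - e ^ 2)) * ((1 - t) * X + t * U) ^ 2 +
        ((1 - t) * Y + t * V) ^ 2 = f ^ 2 / e ^ 2) := by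
  have he0 : 0 < e := hf.trans hfe
  have h1 : 0 < e ^ 2 - f ^ 2 := by nlinarith
  have h2 : 0 < 1 - e ^ 2 := by nlinarith
  have h3 : 0 < 1 - f ^ 2 := by linarith
  have hne : ¬ (U = X ∧ V = Y) := by
    rintro ⟨rfl, rfl⟩
    have hk : (e ^ 2 - f ^ 2) * U ^ 2 + (e ^ 2 - f ^ 2) * (1 - f ^ 2) * V ^ 2 = 0 := by
      linear_combination hrel / 2 + (e ^ 2 + f ^ 4 - 2 * f ^ 2) / 2 * hXY
    have h5 : 0 < (e ^ 2 - f ^ 2) * (1 - f ^ 2) := mul_pos h1 h3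
    have h6 : 0 ≤ (e ^ 2 - f ^ 2) * U ^ 2 := by positivity
    have h7 : 0 ≤ (e ^ 2 - f ^ 2) * (1 - f ^ 2) * V ^ 2 := by positivity
    have h8 : U ^ 2 = 0 := by
      have : (e ^ 2 - f ^ 2) * U ^ 2 = 0 := by linarith
      exact (mul_eq_zero.mp this).resolve_left h1.ne'
    have h9 : V ^ 2 = 0 := by
      have : (e ^ 2 - f ^ 2) * (1 - f ^ 2) * V ^ 2 = 0 := by linarith
      exact (mul_eq_zero.mp this).resolve_left h5.ne'
    linarith
  refine ⟨hne, ?_⟩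
  -- squared lengths factor through `1 - p - q`
  have hdx : (U - X) ^ 2 = (1 - X * U - Y * V) * (1 - X * U + Y * V) := by
    linear_combination V ^ 2 * hXY + (1 - X ^ 2) * hUV
  have hdy : (V - Y) ^ 2 = (1 - X * U - Y * V) * (1 - Y * V + X * U) := by
    linear_combination U ^ 2 * hXY + (1 - Y ^ 2) * hUV
  have hdet : (X * V - Y * U) ^ 2 = (1 - X * U - Y * V) * (1 + X * U + Y * V) := by
    linear_combination (U ^ 2 + V ^ 2) * hXY + hUV
  set G : ℝ := (1 - f ^ 2) * (U - X) ^ 2 + (1 - e ^ 2) * (V - Y) ^ 2 with hG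
  set B : ℝ := (1 - f ^ 2) * X * (U - X) + (1 - e ^ 2) * Y * (V - Y) with hB
  have hGpos : 0 < G := by
    by_contra hcon
    have h6 : 0 ≤ (1 - f ^ 2) * (U - X) ^ 2 := by positivity
    have h7 : 0 ≤ (1 - e ^ 2) * (V - Y) ^ 2 := by positivity
    have h8 : (1 - f ^ 2) * (U - X) ^ 2 = 0 := by linarith
    have h9 : (1 - e ^ 2) * (V - Y) ^ 2 = 0 := by linarith
    have h10 := pow_eq_zero_iff (two_ne_zero) |>.mp ((mul_eq_zero.mp h8).resolve_left h3.ne')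
    have h11 := pow_eq_zero_iff (two_ne_zero) |>.mp ((mul_eq_zero.mp h9).resolve_left h2.ne')
    exact hne ⟨by linarith, by linarith⟩
  have hdisc : f ^ 2 * G = e ^ 2 * (1 - f ^ 2) * (X * V - Y * U) ^ 2 := by
    rw [hG, hdx, hdy, hdet]
    linear_combination -(1 - X * U - Y * V) * hrel
  have key : ∀ t : ℝ, (((1 - f ^ 2) / (1 - e ^ 2)) * ((1 - t) * X + t * U) ^ 2 +
        ((1 - t) * Y + t * V) ^ 2 = f ^ 2 / e ^ 2) ↔ G * t + B = 0 := by
    intro t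
    have hid : e ^ 2 * (G * t + B) ^ 2 = G * (e ^ 2 * ((1 - f ^ 2) * ((1 - t) * X + t * U) ^ 2 +
        (1 - e ^ 2) * ((1 - t) * Y + t * V) ^ 2) - f ^ 2 * (1 - e ^ 2)) := by
      have : e ^ 2 * (G * t + B) ^ 2 - (G * (e ^ 2 * ((1 - f ^ 2) * ((1 - t) * X + t * U) ^ 2 +
        (1 - e ^ 2) * ((1 - t) * Y + t * V) ^ 2) - f ^ 2 * (1 - e ^ 2)))
        = (1 - e ^ 2) * (f ^ 2 * G - e ^ 2 * (1 - f ^ 2) * (X * V - Y * U) ^ 2) := by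
        rw [hG, hB]; ring
      rw [hdisc, sub_self, mul_zero] at this
      linarith
    have heq : (((1 - f ^ 2) / (1 - e ^ 2)) * ((1 - t) * X + t * U) ^ 2 +
        ((1 - t) * Y + t * V) ^ 2 = f ^ 2 / e ^ 2) ↔
        (e ^ 2 * ((1 - f ^ 2) * ((1 - t) * X + t * U) ^ 2 +
        (1 - e ^ 2) * ((1 - t) * Y + t * V) ^ 2) - f ^ 2 * (1 - e ^ 2)) = 0 := by
      have hl : ((1 - f ^ 2) / (1 - e ^ 2)) * ((1 - t) * X + t * U) ^ 2 +
        ((1 - t) * Y + t * V) ^ 2 = ((1 - f ^ 2) * ((1 - t) * X + t * U) ^ 2 +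
        (1 - e ^ 2) * ((1 - t) * Y + t * V) ^ 2) / (1 - e ^ 2) := by
        rw [add_div, mul_div_cancel_left₀ _ h2.ne', div_mul_eq_mul_div]
      rw [hl, div_eq_div_iff h2.ne' (by positivity)]
      constructor <;> intro h <;> linarith
    rw [heq]
    constructor
    · intro h
      rw [h, mul_zero] at hid
      have := (mul_eq_zero.mp hid).resolve_left (by positivity)
      exact pow_eq_zero_iff (two_ne_zero) |>.mp this
    · intro h
      rw [h] at hid
      have h0 : G * (e ^ 2 * ((1 - f ^ 2) * ((1 - t) * X + t * U) ^ 2 +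
        (1 - e ^ 2) * ((1 - t) * Y + t * V) ^ 2) - f ^ 2 * (1 - e ^ 2)) = 0 := by
        rw [← hid]; ring
      exact (mul_eq_zero.mp h0).resolve_left hGpos.ne'
  refine ⟨-B / G, (key _).mpr ?_, ?_⟩
  · rw [mul_div_cancel₀ _ hGpos.ne']; ring
  · intro t ht
    have := (key t).mp ht
    rw [eq_div_iff hGpos.ne']; linarith

/-- for `0 < f < e < 1` and `(X,Y)` on the unit circle, the
denominator of the standard Poncelet map is nonzero, the image lies on the unit
circle and differs from `(X,Y)`, and the segment joining the point to its image
is tangent to the standard pencil ellipse `S_e^f`. -/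
theorem poncelet_tangency (e f X Y : ℝ)
    (hf : 0 < f) (hfe : f < e) (he : e < 1) (hXY : X ^ 2 + Y ^ 2 = 1) :
    ((e ^ 2 - f ^ 4) ^ 2 -
        (2 * f * Real.sqrt ((1 - f ^ 2) * (e ^ 2 - f ^ 2))) ^ 2 * e ^ 2 * Y ^ 2 ≠ 0) ∧
    (poncelet e f (X, Y)).1 ^ 2 + (poncelet e f (X, Y)).2 ^ 2 = 1 ∧
    poncelet e f (X, Y) ≠ (X, Y) ∧
    (∃! t : ℝ,
      ((1 - f ^ 2) / (1 - e ^ 2)) * ((1 - t) * X + t * (poncelet e f (X, Y)).1) ^ 2 +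
        ((1 - t) * Y + t * (poncelet e f (X, Y)).2) ^ 2 = f ^ 2 / e ^ 2) := by
  have he0 : 0 < e := hf.trans hfe
  have h1 : 0 < e ^ 2 - f ^ 2 := by nlinarith
  have h2 : 0 < 1 - e ^ 2 := by nlinarith
  have h3 : 0 < 1 - f ^ 2 := by linarith
  have hY1 : 0 ≤ 1 - Y ^ 2 := by nlinarith [sq_nonneg X]
  have hw0 : 0 ≤ 1 - e ^ 2 * Y ^ 2 := by nlinarith [mul_nonneg (sq_nonneg e) hY1]
  have hA1 : (2 * f * Real.sqrt ((1 - f ^ 2) * (e ^ 2 - f ^ 2))) ^ 2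
      = 4 * f ^ 2 * ((1 - f ^ 2) * (e ^ 2 - f ^ 2)) := by
    rw [mul_pow, Real.sq_sqrt (mul_pos h3 h1).le]; ring
  have hw : Real.sqrt (1 - e ^ 2 * Y ^ 2) ^ 2 = 1 - e ^ 2 * Y ^ 2 := Real.sq_sqrt hw0
  simp only [poncelet]
  generalize 2 * f * Real.sqrt ((1 - f ^ 2) * (e ^ 2 - f ^ 2)) = a at *
  generalize Real.sqrt (1 - e ^ 2 * Y ^ 2) = w at *
  have hrelT := tangency_aux e f X Y
  have hA4pos : 0 < e ^ 2 * (1 - 2 * f ^ 2) + f ^ 4 := by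
    have : 0 < e ^ 2 * (1 - e ^ 2) := by positivity
    nlinarith [sq_nonneg (f ^ 2 - e ^ 2)]
  have h13 : (e ^ 2 + f ^ 4 - 2 * f ^ 2) ^ 2 = (e ^ 2 - f ^ 4) ^ 2 - a ^ 2 := by
    rw [hA1]; ring
  have h14 : (e ^ 2 * (1 - 2 * f ^ 2) + f ^ 4) ^ 2 = (e ^ 2 - f ^ 4) ^ 2 - e ^ 2 * a ^ 2 := by
    rw [hA1]; ring
  clear hA1
  generalize e ^ 2 - f ^ 4 = b at *
  generalize e ^ 2 + f ^ 4 - 2 * f ^ 2 = c at *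
  generalize e ^ 2 * (1 - 2 * f ^ 2) + f ^ 4 = d at *
  have hD : 0 < b ^ 2 - a ^ 2 * e ^ 2 * Y ^ 2 := by
    have : 0 ≤ e ^ 2 * a ^ 2 * (1 - Y ^ 2) := by positivity
    have : 0 < d ^ 2 := by positivity
    nlinarith
  have hX2 : X ^ 2 = 1 - Y ^ 2 := by linarith
  have hcirc : (-((a * d * Y * w + b * c * X) / (b ^ 2 - a ^ 2 * e ^ 2 * Y ^ 2))) ^ 2 +
      ((a * b * X * w - c * d * Y) / (b ^ 2 - a ^ 2 * e ^ 2 * Y ^ 2)) ^ 2 = 1 := by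
    rw [neg_sq, div_pow, div_pow, ← add_div, div_eq_one_iff_eq (by positivity)]
    have : (a * d * Y * w + b * c * X) ^ 2 + (a * b * X * w - c * d * Y) ^ 2
      = a ^ 2 * d ^ 2 * Y ^ 2 * w ^ 2 + b ^ 2 * c ^ 2 * X ^ 2 + a ^ 2 * b ^ 2 * X ^ 2 * w ^ 2
        + c ^ 2 * d ^ 2 * Y ^ 2 := by ring
    rw [this, h13, h14, hw, hX2]; ring
  have hrel : b * (X * (-((a * d * Y * w + b * c * X) / (b ^ 2 - a ^ 2 * e ^ 2 * Y ^ 2)))) +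
      d * (Y * ((a * b * X * w - c * d * Y) / (b ^ 2 - a ^ 2 * e ^ 2 * Y ^ 2))) = -c := by
    have : b * (X * (-((a * d * Y * w + b * c * X) / (b ^ 2 - a ^ 2 * e ^ 2 * Y ^ 2)))) +
      d * (Y * ((a * b * X * w - c * d * Y) / (b ^ 2 - a ^ 2 * e ^ 2 * Y ^ 2)))
      = (-c * (b ^ 2 * X ^ 2 + d ^ 2 * Y ^ 2)) / (b ^ 2 - a ^ 2 * e ^ 2 * Y ^ 2) := by ring
    rw [this, div_eq_iff hD.ne', h14, hX2]; ring
  obtain ⟨hA, hB⟩ := hrelT _ _ hf hfe he hXY hcirc hrel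
  refine ⟨hD.ne', hcirc, ?_, hB⟩
  intro h
  exact hA (Prod.mk.inj h)
end
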